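/- arXiv:2007.02405 — 4 statements merged into one kernel-verified Lean document; each statement's English description precedes it below -/
import Mathlib

section
/- Let C be an [n, k, d]_q MDS code with minimum distance d ≥ 5, and let w be a natural number with d - 2 ≤ w ≤ n. Then the overall number A_w^Σ(V^{≤2}) of Hamming-weight-w vectors lying in cosets of C of weight at most 2 satisfies, as an identity of rational numbers, A_w^Σ(V^{≤2}) = C(n,w) · [ ∑_{j=0}^{w-d} (-1)^j C(w,j) ( q^{w-d+1-j} · V_n(2) - V_{w-j}(2) ) - ε · ((n-d+1)(q-1)/2) · ( C(w, d-1) (2 + (q-1)(n+d-2)) - C(w, d-2)(n-d+2) ) ]. -/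
open Finset

/-- The weight of the coset `x + C` of the linear code `C ⊆ F_q^n`, i.e. the smallest
Hamming weight of a vector in `x + C`; equivalently the Hamming distance from `x` to `C`. -/
noncomputable def cosetWeight {F : Type*} [Field F] [Fintype F] [DecidableEq F] {n : ℕ}
    (C : Submodule F (Fin n → F)) (x : Fin n → F) : ℕ :=
  sInf {m : ℕ | ∃ c ∈ C, hammingNorm (x - c) = m}

/-- `A_w(C)`: the number of codewords of `C` of Hamming weight `w`. -/
noncomputable def numCodewordsOfWeight {F : Type*} [Field F] [Fintype F] [DecidableEq F] {n : ℕ}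
    (C : Submodule F (Fin n → F)) (w : ℕ) : ℕ :=
  {x : Fin n → F | x ∈ C ∧ hammingNorm x = w}.ncard

/-- `A_w^Σ(V^{(W)})`: the overall number of Hamming-weight-`w` vectors of `F_q^n` lying in
cosets of `C` of weight exactly `W`. -/
noncomputable def numVectorsCosetExact {F : Type*} [Field F] [Fintype F] [DecidableEq F] {n : ℕ}
    (C : Submodule F (Fin n → F)) (w W : ℕ) : ℕ :=
  {x : Fin n → F | hammingNorm x = w ∧ cosetWeight C x = W}.ncard

/-- `A_w^Σ(V^{≤W})`: the overall number of Hamming-weight-`w` vectors of `F_q^n` lying in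
cosets of `C` of weight at most `W`. -/
noncomputable def numVectorsCosetLe {F : Type*} [Field F] [Fintype F] [DecidableEq F] {n : ℕ}
    (C : Submodule F (Fin n → F)) (w W : ℕ) : ℕ :=
  {x : Fin n → F | hammingNorm x = w ∧ cosetWeight C x ≤ W}.ncard

/-- The code `C` has minimum distance `d`: every nonzero codeword has Hamming weight at
least `d`, and some nonzero codeword has Hamming weight exactly `d`. -/
def HasMinDist {F : Type*} [Field F] [Fintype F] [DecidableEq F] {n : ℕ}
    (C : Submodule F (Fin n → F)) (d : ℕ) : Prop :=
  (∀ c ∈ C, c ≠ 0 → d ≤ hammingNorm c) ∧ ∃ c ∈ C, c ≠ 0 ∧ hammingNorm c = d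

/-- The code `C` has covering radius `R`: every vector of `F_q^n` is at Hamming distance at
most `R` from `C` and some vector is at Hamming distance exactly `R` from `C`. -/
def HasCoveringRadius {F : Type*} [Field F] [Fintype F] [DecidableEq F] {n : ℕ}
    (C : Submodule F (Fin n → F)) (R : ℕ) : Prop :=
  (∀ x : Fin n → F, cosetWeight C x ≤ R) ∧ ∃ x : Fin n → F, cosetWeight C x = R

/-- `V_m(t) = ∑_{i=0}^t (q-1)^i C(m,i)`, the volume of a Hamming sphere of radius `t`
in `F_q^m`, as a rational number. -/
def sphereVol (q m t : ℕ) : ℚ :=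
  ∑ i ∈ Finset.range (t + 1), ((q : ℚ) - 1) ^ i * (m.choose i : ℚ)


def spt {F : Type*} [Field F] [DecidableEq F] {n : ℕ} (x : Fin n → F) : Finset (Fin n) :=
  univ.filter (fun i => x i ≠ 0)

lemma mem_spt {F : Type*} [Field F] [DecidableEq F] {n : ℕ} (x : Fin n → F) (i : Fin n) :
    i ∈ spt x ↔ x i ≠ 0 := by simp [spt]

lemma card_spt {F : Type*} [Field F] [DecidableEq F] {n : ℕ} (x : Fin n → F) :
    (spt x).card = hammingNorm x := rfl

lemma indic {α : Type*} [DecidableEq α] (A T : Finset α) :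
    ∑ S ∈ T.powerset, (-1 : ℚ) ^ (T.card - S.card) * (if A ⊆ S then 1 else 0)
      = if A = T then 1 else 0 := by
  by_cases hAT : A ⊆ T
  · have h := Finset.prod_add (fun _ : α => (1:ℚ)) (fun i => if i ∈ A then (0:ℚ) else -1) T
    have h2 : ∏ i ∈ T, ((1:ℚ) + if i ∈ A then (0:ℚ) else -1) = if A = T then 1 else 0 := by
      split_ifs with e
      · subst e
        apply Finset.prod_eq_one
        intro i hi
        simp [hi]
      · obtain ⟨i, hi, hiA⟩ : ∃ i ∈ T, i ∉ A := by
          by_contra hc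
          push Not at hc
          exact e (Finset.Subset.antisymm hAT hc)
        apply Finset.prod_eq_zero hi
        simp [hiA]
    rw [← h2, h]
    apply Finset.sum_congr rfl
    intro S hS
    rw [Finset.mem_powerset] at hS
    rw [← Finset.card_sdiff_of_subset hS]
    simp only [Finset.prod_const_one, one_mul]
    split_ifs with e
    · rw [mul_one, ← Finset.prod_const]
      apply Finset.prod_congr rfl
      intro i hi
      rw [Finset.mem_sdiff] at hi
      rw [if_neg (fun h => hi.2 (e h))]
    · rw [mul_zero]
      obtain ⟨i, hi, hiS⟩ := Finset.not_subset.1 e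
      symm
      apply Finset.prod_eq_zero (i := i)
      · exact Finset.mem_sdiff.2 ⟨hAT hi, hiS⟩
      · simp [hi]
  · rw [if_neg (fun h => hAT h.subset)]
    apply Finset.sum_eq_zero
    intro S hS
    rw [Finset.mem_powerset] at hS
    rw [if_neg (fun h => hAT (h.trans hS)), mul_zero]

lemma mobius {F : Type*} [Field F] [Fintype F] [DecidableEq F] {n : ℕ}
    (B : Finset (Fin n → F)) (N : ℕ → ℚ)
    (hN : ∀ S : Finset (Fin n), ((B.filter (fun x => spt x ⊆ S)).card : ℚ) = N S.card) (w : ℕ) :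
    ((B.filter (fun x => hammingNorm x = w)).card : ℚ) =
      n.choose w * ∑ m ∈ range (w + 1), w.choose m * (-1 : ℚ) ^ (w - m) * N m := by
  have h1 : ∀ T ∈ powersetCard w (univ : Finset (Fin n)),
      ∑ S ∈ T.powerset, (-1 : ℚ) ^ (T.card - S.card) * N S.card =
      ∑ m ∈ range (w + 1), w.choose m * (-1 : ℚ) ^ (w - m) * N m := by
    intro T hT
    rw [mem_powersetCard] at hT
    rw [Finset.sum_powerset_apply_card (fun m => (-1 : ℚ) ^ (T.card - m) * N m), hT.2]
    apply Finset.sum_congr rfl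
    intro m _
    rw [nsmul_eq_mul, mul_assoc]
  have h2 := Finset.sum_congr rfl h1
  rw [Finset.sum_const, card_powersetCard, card_univ, Fintype.card_fin, nsmul_eq_mul] at h2
  rw [← h2]
  have h3 : ∀ S : Finset (Fin n), N S.card = ∑ x ∈ B, if spt x ⊆ S then (1:ℚ) else 0 := by
    intro S
    rw [← hN, Finset.sum_boole]
  simp_rw [h3, Finset.mul_sum]
  have h4 : ∀ T : Finset (Fin n), ∑ S ∈ T.powerset, ∑ x ∈ B,
      (-1 : ℚ) ^ (T.card - S.card) * (if spt x ⊆ S then (1:ℚ) else 0)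
      = ∑ x ∈ B, if spt x = T then 1 else 0 := by
    intro T
    rw [Finset.sum_comm]
    exact Finset.sum_congr rfl fun x _ => indic _ _
  simp_rw [h4]
  rw [Finset.sum_comm, ← Finset.sum_boole]
  apply Finset.sum_congr rfl
  intro x _
  rw [Finset.sum_ite_eq]
  simp [mem_powersetCard, card_spt]

lemma card_spt_eq {F : Type*} [Field F] [Fintype F] [DecidableEq F] {n : ℕ}
    (T : Finset (Fin n)) :
    ((univ : Finset (Fin n → F)).filter (fun x => spt x = T)).card
      = (Fintype.card F - 1) ^ T.card := by
  have : (univ : Finset (Fin n → F)).filter (fun x => spt x = T) =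
      Fintype.piFinset (fun i => if i ∈ T then univ.erase (0:F) else {0}) := by
    ext x
    simp only [mem_filter, mem_univ, true_and, Fintype.mem_piFinset, Finset.ext_iff, mem_spt]
    apply forall_congr'
    intro i
    by_cases h : i ∈ T <;> simp [h]
  rw [this, Fintype.card_piFinset]
  have h2 : ∀ i : Fin n, (if i ∈ T then univ.erase (0:F) else {0}).card
      = if i ∈ T then Fintype.card F - 1 else 1 := by
    intro i
    split_ifs
    · rw [card_erase_of_mem (mem_univ _), card_univ]
    · simp
  simp_rw [h2]
  rw [Finset.prod_ite_mem]
  simp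

lemma card_ball {F : Type*} [Field F] [Fintype F] [DecidableEq F] {n : ℕ}
    (S : Finset (Fin n)) (t : ℕ) :
    ((((univ : Finset (Fin n → F)).filter (fun x => hammingNorm x ≤ t)).filter
      (fun x => spt x ⊆ S)).card : ℚ) = sphereVol (Fintype.card F) S.card t := by
  set X := ((univ : Finset (Fin n → F)).filter (fun x => hammingNorm x ≤ t)).filter
      (fun x => spt x ⊆ S) with hX
  have h1 : X.card = ∑ i ∈ range (t+1), (X.filter (fun x => hammingNorm x = i)).card := by
    apply Finset.card_eq_sum_card_fiberwise
    intro x hx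
    simp [hX] at hx
    simp
    omega
  have h2 : ∀ i ∈ range (t+1), (X.filter (fun x => hammingNorm x = i)).card
      = (Fintype.card F - 1) ^ i * S.card.choose i := by
    intro i hi
    rw [mem_range] at hi
    have : (X.filter (fun x => hammingNorm x = i)).card = ∑ T ∈ powersetCard i S,
        ((X.filter (fun x => hammingNorm x = i)).filter (fun x => spt x = T)).card := by
      apply Finset.card_eq_sum_card_fiberwise
      intro x hx
      simp [hX] at hx
      simp only [Finset.mem_coe, mem_powersetCard]
      exact ⟨hx.1.2, hx.2⟩
    rw [this]
    have h3 : ∀ T ∈ powersetCard i S,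
        ((X.filter (fun x => hammingNorm x = i)).filter (fun x => spt x = T)).card
          = (Fintype.card F - 1) ^ i := by
      intro T hT
      rw [mem_powersetCard] at hT
      rw [← hT.2, ← card_spt_eq T]
      congr 1
      ext x
      simp only [hX, mem_filter, mem_univ, true_and]
      constructor
      · exact fun h => h.2
      · intro h
        rw [← card_spt, h]
        exact ⟨⟨⟨by omega, hT.1⟩, rfl⟩, rfl⟩
    rw [Finset.sum_congr rfl h3, sum_const, card_powersetCard, smul_eq_mul, mul_comm]
  rw [h1, Finset.sum_congr rfl h2, sphereVol]
  push_cast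
  apply Finset.sum_congr rfl
  intro i _
  rw [Nat.cast_sub Fintype.card_pos, Nat.cast_one]

/-- restriction of codewords to a coordinate set -/
def restr {F : Type*} [Field F] {n : ℕ} (C : Submodule F (Fin n → F)) (U : Finset (Fin n)) :
    C →ₗ[F] (U → F) :=
  (LinearMap.funLeft F F (Subtype.val : U → Fin n)).comp C.subtype

lemma restr_apply {F : Type*} [Field F] {n : ℕ} (C : Submodule F (Fin n → F))
    (U : Finset (Fin n)) (c : C) (i : U) : restr C U c i = (c : Fin n → F) i := rfl

lemma restr_surj {F : Type*} [Field F] [Fintype F] [DecidableEq F] {n k d : ℕ}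
    (C : Submodule F (Fin n → F))
    (hk : Module.finrank F C = k) (hmin : HasMinDist C d) (hMDS : d + k = n + 1)
    (U : Finset (Fin n)) (hU : U.card ≤ k) (hd : 1 ≤ d) : Function.Surjective (restr C U) := by
  obtain ⟨U', hUU', hU'⟩ : ∃ U' : Finset (Fin n), U ⊆ U' ∧ U'.card = k := by
    obtain ⟨U', h1, _, h2⟩ := Finset.exists_subsuperset_card_eq (Finset.subset_univ U) hU
      (by simp; omega)
    exact ⟨U', h1, h2⟩
  have hinj : Function.Injective (restr C U') := by
    rw [← LinearMap.ker_eq_bot, LinearMap.ker_eq_bot']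
    intro c hc
    by_contra hne
    have h1 := hmin.1 c c.2 (by simpa using hne)
    have h2 : spt (c : Fin n → F) ⊆ U'ᶜ := by
      intro i hi
      rw [mem_spt] at hi
      rw [mem_compl]
      intro hiU
      exact hi (congrFun hc ⟨i, hiU⟩)
    have h3 := Finset.card_le_card h2
    rw [card_spt, card_compl, Fintype.card_fin] at h3
    omega
  have hsurj : Function.Surjective (restr C U') := by
    rw [← LinearMap.injective_iff_surjective_of_finrank_eq_finrank]
    · exact hinj
    · simp [hk, hU']
  intro y
  obtain ⟨c, hc⟩ := hsurj (fun i => if h : (i : Fin n) ∈ U then y ⟨i, h⟩ else 0)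
  refine ⟨c, ?_⟩
  funext i
  have := congrFun hc ⟨i, hUU' i.2⟩
  simpa [restr_apply] using this

open Classical in
lemma card_code {F : Type*} [Field F] [Fintype F] [DecidableEq F] {n k d : ℕ}
    (C : Submodule F (Fin n → F))
    (hk : Module.finrank F C = k) (hmin : HasMinDist C d) (hMDS : d + k = n + 1)
    (hd : 1 ≤ d) (S : Finset (Fin n)) (hS : d - 1 ≤ S.card) (e : Fin n → F) :
    ((univ : Finset (Fin n → F)).filter (fun c => c ∈ C ∧ spt (c + e) ⊆ S)).card
      = Fintype.card F ^ (S.card + 1 - d) := by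
  have hSn : S.card ≤ n := by simpa using Finset.card_le_univ S
  have hUc : (Sᶜ).card = n - S.card := by simp [card_compl]
  have hsurj := restr_surj C hk hmin hMDS Sᶜ (by omega) hd
  set g := restr C Sᶜ with hg
  have hfib : ∀ y : (Sᶜ : Finset (Fin n)) → F, ((univ : Finset C).filter (fun c => g c = y)).card =
      ((univ : Finset C).filter (fun c => g c = 0)).card := by
    intro y
    obtain ⟨c0, hc0⟩ := hsurj y
    apply Finset.card_bij' (fun c _ => c - c0) (fun c _ => c + c0)
    · intro c hc; simp at hc ⊢; rw [hc, hc0, sub_self]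
    · intro c hc; simp at hc ⊢; rw [hc, hc0, zero_add]
    · intro c hc; simp
    · intro c hc; simp
  have htot : (univ : Finset C).card = ∑ y : (Sᶜ : Finset (Fin n)) → F,
      ((univ : Finset C).filter (fun c => g c = y)).card :=
    Finset.card_eq_sum_card_fiberwise (by intro x _; simp)
  rw [Finset.sum_congr rfl (fun y _ => hfib y), sum_const, card_univ, card_univ,
    Module.card_eq_pow_finrank (K := F) (V := C), hk, smul_eq_mul] at htot
  have h5 : Fintype.card ((Sᶜ : Finset (Fin n)) → F) = Fintype.card F ^ (n - S.card) := by
    rw [Fintype.card_fun, Fintype.card_coe, hUc]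
  rw [h5] at htot
  have h6 : k = (n - S.card) + (S.card + 1 - d) := by omega
  rw [h6, pow_add] at htot
  have h7 := Nat.eq_of_mul_eq_mul_left (pow_pos Fintype.card_pos _) htot
  rw [h7, ← hfib (fun i => - e i)]
  symm
  apply Finset.card_bij (fun (c : C) _ => (c : Fin n → F))
  · intro c hc
    simp only [mem_filter, mem_univ, true_and] at hc ⊢
    refine ⟨c.2, ?_⟩
    intro i hi
    rw [mem_spt] at hi
    by_contra hiS
    have := congrFun hc ⟨i, mem_compl.2 hiS⟩
    rw [hg, restr_apply] at this
    apply hi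
    simp at this ⊢
    rw [this]; simp
  · intro a _ b _ h
    exact Subtype.ext h
  · intro c hc
    simp only [mem_filter, mem_univ, true_and] at hc
    refine ⟨⟨c, hc.1⟩, ?_, rfl⟩
    simp only [mem_filter, mem_univ, true_and]
    funext i
    rw [hg, restr_apply]
    by_contra hne
    refine mem_compl.1 i.2 (hc.2 ((mem_spt _ _).2 ?_))
    intro h0
    exact hne (eq_neg_of_add_eq_zero_left h0)

lemma cosetWeight_le_iff {F : Type*} [Field F] [Fintype F] [DecidableEq F] {n : ℕ}
    (C : Submodule F (Fin n → F)) (x : Fin n → F) (t : ℕ) :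
    cosetWeight C x ≤ t ↔ ∃ c ∈ C, hammingNorm (x - c) ≤ t := by
  unfold cosetWeight
  constructor
  · intro h
    have hne : {m : ℕ | ∃ c ∈ C, hammingNorm (x - c) = m}.Nonempty := ⟨_, 0, C.zero_mem, rfl⟩
    obtain ⟨c, hc, h2⟩ := Nat.sInf_mem hne
    exact ⟨c, hc, h2 ▸ h⟩
  · rintro ⟨c, hc, h⟩
    have h2 : hammingNorm (x - c) ∈ {m : ℕ | ∃ c ∈ C, hammingNorm (x - c) = m} := ⟨c, hc, rfl⟩
    exact (Nat.sInf_le h2).trans h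

open Classical in
/-- pairs codeword, error with sum supported in S -/
noncomputable def prs {F : Type*} [Field F] [Fintype F] [DecidableEq F] {n : ℕ}
    (C : Submodule F (Fin n → F)) (S : Finset (Fin n)) :
    Finset ((Fin n → F) × (Fin n → F)) :=
  univ.filter (fun p => p.1 ∈ C ∧ hammingNorm p.2 ≤ 2 ∧ spt (p.1 + p.2) ⊆ S)

lemma mem_prs {F : Type*} [Field F] [Fintype F] [DecidableEq F] {n : ℕ}
    (C : Submodule F (Fin n → F)) (S : Finset (Fin n)) (p : (Fin n → F) × (Fin n → F)) :
    p ∈ prs C S ↔ p.1 ∈ C ∧ hammingNorm p.2 ≤ 2 ∧ spt (p.1 + p.2) ⊆ S := by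
  simp [prs]

lemma card_B {F : Type*} [Field F] [Fintype F] [DecidableEq F] {n d : ℕ}
    (C : Submodule F (Fin n → F)) (hmin : HasMinDist C d) (hd : 5 ≤ d) (S : Finset (Fin n)) :
    (((univ : Finset (Fin n → F)).filter (fun x => cosetWeight C x ≤ 2)).filter
      (fun x => spt x ⊆ S)).card = (prs C S).card := by
  symm
  apply Finset.card_bij (fun p _ => p.1 + p.2)
  · intro p hp
    rw [mem_prs] at hp
    simp only [mem_filter, mem_univ, true_and, cosetWeight_le_iff]
    exact ⟨⟨p.1, hp.1, by simpa using hp.2.1⟩, hp.2.2⟩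
  · rintro ⟨c, e⟩ hp ⟨c', e'⟩ hp' h
    rw [mem_prs] at hp hp'
    simp only at hp hp' h
    have h1 : c - c' = -e + e' := by
      rw [neg_add_eq_sub, sub_eq_sub_iff_add_eq_add, h, add_comm]
    have h2 : hammingNorm (c - c') ≤ 4 := by
      rw [h1, ← hammingDist_eq_hammingNorm]
      have := hammingDist_triangle e 0 e'
      rw [hammingDist_zero_right, hammingDist_zero_left] at this
      omega
    have h3 : c - c' = 0 := by
      by_contra hne
      have := hmin.1 _ (C.sub_mem hp.1 hp'.1) hne
      omega
    have h4 : e' - e = 0 := by rw [← neg_add_eq_sub, ← h1, h3]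
    rw [sub_eq_zero] at h3 h4
    rw [h3, h4]
  · intro x hx
    simp only [mem_filter, mem_univ, true_and, cosetWeight_le_iff] at hx
    obtain ⟨⟨c, hc, h⟩, hs⟩ := hx
    exact ⟨(c, x - c), (mem_prs _ _ _).2 ⟨hc, h, by simpa using hs⟩, by simp⟩

lemma card_prs_big {F : Type*} [Field F] [Fintype F] [DecidableEq F] {n k d : ℕ}
    (C : Submodule F (Fin n → F))
    (hk : Module.finrank F C = k) (hmin : HasMinDist C d) (hMDS : d + k = n + 1)
    (hd : 5 ≤ d) (S : Finset (Fin n)) (hS : d - 1 ≤ S.card) :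
    ((prs C S).card : ℚ) =
      (Fintype.card F : ℚ) ^ (S.card + 1 - d) * sphereVol (Fintype.card F) n 2 := by
  classical
  have h1 : (prs C S).card = ∑ e ∈ (univ : Finset (Fin n → F)).filter (fun x => hammingNorm x ≤ 2),
      ((prs C S).filter (fun p => p.2 = e)).card := by
    apply Finset.card_eq_sum_card_fiberwise
    intro p hp
    rw [Finset.mem_coe, mem_prs] at hp
    simpa using hp.2.1
  have h2 : ∀ e ∈ (univ : Finset (Fin n → F)).filter (fun x => hammingNorm x ≤ 2),
      ((prs C S).filter (fun p => p.2 = e)).card = Fintype.card F ^ (S.card + 1 - d) := by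
    intro e he
    rw [← card_code C hk hmin hMDS (by omega) S hS e]
    apply Finset.card_bij (fun p _ => p.1)
    · rintro ⟨c, e'⟩ hp
      simp only [mem_filter, mem_prs, mem_univ, true_and] at hp ⊢
      obtain ⟨⟨h1, h2, h3⟩, rfl⟩ := hp
      exact ⟨h1, h3⟩
    · rintro ⟨c, e1⟩ hp ⟨c', e2⟩ hp' h
      simp only [mem_filter] at hp hp' h
      rw [h, hp.2, hp'.2]
    · intro c hc
      simp only [mem_filter, mem_univ, true_and] at hc he
      exact ⟨(c, e), by simp only [mem_filter, mem_prs]; exact ⟨⟨hc.1, he, hc.2⟩, trivial⟩, rfl⟩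
  rw [h1, Finset.sum_congr rfl h2, sum_const, smul_eq_mul, mul_comm]
  have h3 := card_ball (F := F) (univ : Finset (Fin n)) 2
  simp only [subset_univ, filter_true, card_univ, Fintype.card_fin] at h3
  push_cast
  rw [← h3]

lemma card_prs_zero {F : Type*} [Field F] [Fintype F] [DecidableEq F] {n : ℕ}
    (C : Submodule F (Fin n → F)) (S : Finset (Fin n)) :
    (((prs C S).filter (fun p => p.1 = 0)).card : ℚ) = sphereVol (Fintype.card F) S.card 2 := by
  rw [← card_ball (F := F) S 2]
  congr 1
  apply Finset.card_bij (fun p _ => p.2)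
  · rintro ⟨c, e⟩ hp
    simp only [mem_filter, mem_prs, mem_univ, true_and] at hp ⊢
    obtain ⟨⟨h1, h2, h3⟩, rfl⟩ := hp
    rw [zero_add] at h3
    exact ⟨h2, h3⟩
  · rintro ⟨c, e1⟩ hp ⟨c', e2⟩ hp' h
    simp only [mem_filter] at hp hp' h
    rw [h, hp.2, hp'.2]
  · intro e he
    simp only [mem_filter, mem_univ, true_and] at he
    refine ⟨(0, e), ?_, rfl⟩
    simp only [mem_filter, mem_prs, zero_add]
    exact ⟨⟨C.zero_mem, he.1, he.2⟩, trivial⟩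

lemma prs_subset {F : Type*} [Field F] [Fintype F] [DecidableEq F] {n : ℕ}
    (S : Finset (Fin n)) (c e : Fin n → F) (h : spt (c + e) ⊆ S) : spt c ⊆ S ∪ spt e := by
  intro i hi
  rw [mem_union]
  by_contra hc
  push Not at hc
  have h1 : i ∉ spt (c + e) := fun hh => hc.1 (h hh)
  have h2 := hc.2
  rw [mem_spt, not_not] at h1 h2
  rw [mem_spt] at hi
  simp [h2] at h1
  exact hi h1

lemma card_prs_small {F : Type*} [Field F] [Fintype F] [DecidableEq F] {n d : ℕ}
    (C : Submodule F (Fin n → F)) (hmin : HasMinDist C d) (S : Finset (Fin n))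
    (hS : S.card + 2 < d) :
    ((prs C S).filter (fun p => ¬ p.1 = 0)).card = 0 := by
  rw [Finset.card_eq_zero, Finset.filter_eq_empty_iff]
  rintro ⟨c, e⟩ hp
  rw [mem_prs] at hp
  simp only [not_not] at hp ⊢
  by_contra hne
  have h1 := hmin.1 _ hp.1 hne
  have h2 := Finset.card_le_card (prs_subset S c e hp.2.2)
  have h3 := Finset.card_union_le S (spt e)
  rw [card_spt] at h2 h3
  omega

lemma card_prs_mid {F : Type*} [Field F] [Fintype F] [DecidableEq F] {n k d : ℕ}
    (C : Submodule F (Fin n → F))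
    (hk : Module.finrank F C = k) (hmin : HasMinDist C d) (hMDS : d + k = n + 1)
    (hd : 5 ≤ d) (S : Finset (Fin n)) (hS : S.card + 2 = d) :
    ((prs C S).filter (fun p => ¬ p.1 = 0)).card =
      (n - S.card).choose 2 * (Fintype.card F - 1) := by
  classical
  set X := (prs C S).filter (fun p => ¬ p.1 = 0) with hX
  have h1 : X.card = ∑ R ∈ powersetCard 2 Sᶜ, (X.filter (fun p => spt p.2 = R)).card := by
    apply Finset.card_eq_sum_card_fiberwise
    rintro ⟨c, e⟩ hp
    simp only [hX, Finset.mem_coe, mem_filter, mem_prs] at hp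
    obtain ⟨⟨hc, he, hs⟩, hne⟩ := hp
    have h1 := hmin.1 _ hc hne
    have h2 := Finset.card_le_card (prs_subset S c e hs)
    have h3 := Finset.card_union_add_card_inter S (spt e)
    rw [← card_spt] at h1 he
    have h4 : (S ∩ spt e).card = 0 := by omega
    rw [Finset.card_eq_zero] at h4
    simp only [Finset.mem_coe, mem_powersetCard]
    refine ⟨?_, by omega⟩
    intro i hi
    rw [mem_compl]
    intro hiS
    have : i ∈ S ∩ spt e := mem_inter.2 ⟨hiS, hi⟩
    rw [h4] at this
    simp at this
  have h2 : ∀ R ∈ powersetCard 2 Sᶜ,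
      (X.filter (fun p => spt p.2 = R)).card = Fintype.card F - 1 := by
    intro R hR
    rw [mem_powersetCard] at hR
    have hdisj : Disjoint S R := by
      rw [Finset.disjoint_right]
      intro i hi
      exact mem_compl.1 (hR.1 hi)
    have hcard : (S ∪ R).card = d := by
      rw [card_union_of_disjoint hdisj]; omega
    have hcc := card_code C hk hmin hMDS (by omega) (S ∪ R) (by omega) 0
    rw [hcard] at hcc
    have : d + 1 - d = 1 := by omega
    rw [this, pow_one] at hcc
    rw [← hcc, ← Finset.card_erase_of_mem (a := (0 : Fin n → F))
      (by simp [C.zero_mem, spt])]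
    apply Finset.card_bij (fun p _ => p.1)
    · rintro ⟨c, e⟩ hp
      simp only [hX, mem_filter, mem_prs, mem_univ, true_and, mem_erase, add_zero] at hp ⊢
      obtain ⟨⟨⟨hc, he, hs⟩, hne⟩, rfl⟩ := hp
      exact ⟨hne, hc, prs_subset S c e hs⟩
    · rintro ⟨c, e1⟩ hp ⟨c', e2⟩ hp' h
      simp only [hX, mem_filter, mem_prs] at hp hp' h
      subst h
      obtain ⟨⟨⟨hc, he, hs⟩, hne⟩, hr⟩ := hp
      obtain ⟨⟨⟨hc', he', hs'⟩, hne'⟩, hr'⟩ := hp'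
      congr 1
      funext i
      by_cases hi : i ∈ S
      · have hiR : i ∉ R := Finset.disjoint_left.1 hdisj hi
        have a1 := hiR
        have a2 := hiR
        rw [← hr, mem_spt, not_not] at a1
        rw [← hr', mem_spt, not_not] at a2
        rw [a1, a2]
      · have a1 : i ∉ spt (c + e1) := fun h => hi (hs h)
        have a2 : i ∉ spt (c + e2) := fun h => hi (hs' h)
        rw [mem_spt, not_not] at a1 a2
        exact add_left_cancel (a1.trans a2.symm)
    · intro c hc
      simp only [mem_filter, mem_univ, true_and, mem_erase, add_zero] at hc
      obtain ⟨hne, hcC, hs⟩ := hc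
      have hw := hmin.1 _ hcC hne
      have heq : spt c = S ∪ R := Finset.eq_of_subset_of_card_le hs (by rw [hcard, card_spt]; exact hw)
      have hspt : spt (fun i => if i ∈ S then 0 else - c i) = R := by
        ext i
        have := Finset.ext_iff.1 heq i
        rw [mem_spt, mem_union] at this
        rw [mem_spt]
        by_cases hi : i ∈ S
        · simp [hi, Finset.disjoint_left.1 hdisj hi]
        · simp [hi] at this ⊢
          exact this
      refine ⟨(c, fun i => if i ∈ S then 0 else - c i), ?_, rfl⟩
      simp only [hX, mem_filter, mem_prs]
      refine ⟨⟨⟨hcC, ?_, ?_⟩, hne⟩, hspt⟩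
      · rw [← card_spt, hspt, hR.2]
      · intro i hi
        rw [mem_spt] at hi
        by_contra hiS
        simp [hiS] at hi
  rw [h1, Finset.sum_congr rfl h2, sum_const, card_powersetCard, card_compl, Fintype.card_fin,
    smul_eq_mul]

/-- count of vectors near the code supported in a set of size m -/
noncomputable def cntN (q n d m : ℕ) : ℚ :=
  if m + 2 < d then sphereVol q m 2
  else if m + 2 = d then sphereVol q m 2 + ((n - m).choose 2 : ℚ) * ((q : ℚ) - 1)
  else (q : ℚ) ^ (m + 1 - d) * sphereVol q n 2

lemma card_prs_eq {F : Type*} [Field F] [Fintype F] [DecidableEq F] {n k d : ℕ}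
    (C : Submodule F (Fin n → F))
    (hk : Module.finrank F C = k) (hmin : HasMinDist C d) (hMDS : d + k = n + 1)
    (hd : 5 ≤ d) (S : Finset (Fin n)) :
    ((prs C S).card : ℚ) = cntN (Fintype.card F) n d S.card := by
  have hsplit := Finset.card_filter_add_card_filter_not (s := prs C S) (fun p => p.1 = 0)
  unfold cntN
  split_ifs with h1 h2
  · rw [← hsplit, card_prs_small C hmin S h1, add_zero, card_prs_zero]
  · rw [← hsplit, card_prs_mid C hk hmin hMDS hd S h2]
    push_cast
    rw [card_prs_zero, Nat.cast_sub Fintype.card_pos, Nat.cast_one]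
  · exact card_prs_big C hk hmin hMDS hd S (by omega)

lemma final_sum (q n d w : ℕ) (hd : 5 ≤ d) (hdn : d ≤ n + 1) (hw1 : d - 2 ≤ w) :
    ∑ m ∈ range (w + 1), (w.choose m : ℚ) * (-1 : ℚ) ^ (w - m) *
      (cntN q n d m - sphereVol q m 2) =
    ((∑ j ∈ Finset.range (w + 1 - d), (-1 : ℚ) ^ j * (w.choose j : ℚ) *
            ((q : ℚ) ^ (w - d + 1 - j) * sphereVol q n 2 - sphereVol q (w - j) 2))
          - (-1 : ℚ) ^ (w + d) * (((n : ℚ) - (d : ℚ) + 1) * ((q : ℚ) - 1) / 2) *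
              ((w.choose (d - 1) : ℚ) * (2 + ((q : ℚ) - 1) * ((n : ℚ) + (d : ℚ) - 2))
                - (w.choose (d - 2) : ℚ) * ((n : ℚ) - (d : ℚ) + 2))) := by
  obtain ⟨a, rfl⟩ : ∃ a, d = a + 2 := ⟨d - 2, by omega⟩
  obtain ⟨r, rfl⟩ : ∃ r, w = a + r := ⟨w - a, by omega⟩
  obtain ⟨b, rfl⟩ : ∃ b, n = a + 1 + b := ⟨n - a - 1, by omega⟩
  have e1 : a + 2 - 1 = a + 1 := by omega
  have e2 : a + 2 - 2 = a := by omega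
  rw [e1, e2]
  rw [show a + r + 1 = a + (r + 1) by ring, Finset.sum_range_add]
  have hz : ∑ m ∈ range a, ((a + r).choose m : ℚ) * (-1 : ℚ) ^ (a + r - m) *
      (cntN q (a + 1 + b) (a + 2) m - sphereVol q m 2) = 0 := by
    apply Finset.sum_eq_zero
    intro m hm
    rw [mem_range] at hm
    rw [cntN, if_pos (by omega), sub_self, mul_zero]
  rw [hz, zero_add]
  have hm0 : cntN q (a + 1 + b) (a + 2) a - sphereVol q a 2
      = ((b : ℚ) + 1) * b / 2 * ((q : ℚ) - 1) := by
    rw [cntN, if_neg (by omega), if_pos rfl, show a + 1 + b - a = b + 1 by omega,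
      Nat.cast_choose_two]
    push_cast
    ring
  have hm1 : cntN q (a + 1 + b) (a + 2) (a + 1) - sphereVol q (a + 1) 2
      = (b : ℚ) * ((q : ℚ) - 1) / 2 * (2 + ((q : ℚ) - 1) * (2 * a + 1 + b)) := by
    rw [cntN, if_neg (by omega), if_neg (by omega), show a + 1 + 1 - (a + 2) = 0 by omega]
    simp only [sphereVol, Finset.sum_range_succ, Finset.sum_range_zero, Nat.choose_zero_right,
      Nat.choose_one_right, Nat.cast_choose_two]
    push_cast
    ring
  rcases r with _ | _ | t
  · simp [hm0]
    rw [show (-1:ℚ) ^ (a + (a + 2)) = 1 from Even.neg_one_pow ⟨a+1, by ring⟩]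
    ring
  · rw [Finset.sum_range_succ, Finset.sum_range_one]
    rw [show a + (0+1) + 1 - (a + 2) = 0 by omega, add_zero, hm0, zero_add, hm1,
      show (-1:ℚ) ^ (a + 1 + (a + 2)) = -1 from Odd.neg_one_pow ⟨a+1, by ring⟩]
    simp
    ring
  · rw [Finset.sum_range_succ', Finset.sum_range_succ', zero_add, add_zero, hm0, hm1]
    have hs : (-1:ℚ) ^ (a + (t + 1 + 1) + (a + 2)) = (-1) ^ t := by
      rw [show a + (t + 1 + 1) + (a + 2) = t + 2 * (a + 2) by ring, pow_add, pow_mul]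
      simp
    rw [hs, show a + (t + 1 + 1) - (a + 1) = t + 1 by omega,
      show a + (t + 1 + 1) - a = t + 2 by omega,
      show a + (t + 1 + 1 + 1) - (a + 2) = t + 1 by omega,
      ← Finset.sum_range_reflect (fun j => (-1:ℚ) ^ j * ((a + (t + 1 + 1)).choose j : ℚ) *
            ((q : ℚ) ^ (a + (t + 1 + 1) - (a + 2) + 1 - j) * sphereVol q (a + 1 + b) 2
              - sphereVol q (a + (t + 1 + 1) - j) 2)) (t + 1)]
    have hmain : ∀ m ∈ range (t + 1),
        ((a + (t + 1 + 1)).choose (a + (m + 1 + 1)) : ℚ) *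
          (-1 : ℚ) ^ (a + (t + 1 + 1) - (a + (m + 1 + 1))) *
      (cntN q (a + 1 + b) (a + 2) (a + (m + 1 + 1)) - sphereVol q (a + (m + 1 + 1)) 2) =
        (-1:ℚ) ^ (t + 1 - 1 - m) * ((a + (t + 1 + 1)).choose (t + 1 - 1 - m) : ℚ) *
            ((q : ℚ) ^ (a + (t + 1 + 1) - (a + 2) + 1 - (t + 1 - 1 - m)) * sphereVol q (a + 1 + b) 2
              - sphereVol q (a + (t + 1 + 1) - (t + 1 - 1 - m)) 2) := by
      intro m hm
      rw [mem_range] at hm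
      rw [cntN, if_neg (by omega), if_neg (by omega),
        ← Nat.choose_symm (show a + (m + 1 + 1) ≤ a + (t + 1 + 1) by omega),
        show a + (t + 1 + 1) - (a + (m + 1 + 1)) = t + 1 - 1 - m by omega,
        show a + (t + 1 + 1) - (t + 1 - 1 - m) = a + (m + 1 + 1) by omega,
        show a + (t + 1 + 1) - (a + 2) + 1 - (t + 1 - 1 - m) = a + (m + 1 + 1) + 1 - (a + 2) by omega]
      ring
    rw [Finset.sum_congr rfl hmain]
    push_cast
    ring

/-- **Integral weight spectrum of cosets of weight ≤ 2 of an MDS code** (Lemma 5.1,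
eq. (5.1)).  For an `[n,k,d]_q` MDS code with `d ≥ 5` and `d-2 ≤ w ≤ n`, as rationals,
`A_w^Σ(V^{≤2}) = C(n,w)[ ∑_{j=0}^{w-d} (-1)^j C(w,j)( q^{w-d+1-j} V_n(2) - V_{w-j}(2) )
  - (-1)^{w-d} ((n-d+1)(q-1)/2)( C(w,d-1)(2+(q-1)(n+d-2)) - C(w,d-2)(n-d+2) ) ]`. -/
theorem numVectorsCosetLe_two_eq {F : Type*} [Field F] [Fintype F] [DecidableEq F]
    (q n k d w : ℕ) (hq : Fintype.card F = q)
    (C : Submodule F (Fin n → F))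
    (hk : Module.finrank F C = k) (hmin : HasMinDist C d) (hMDS : d + k = n + 1)
    (hd : 5 ≤ d) (hw1 : d - 2 ≤ w) (hwn : w ≤ n) :
    (numVectorsCosetLe C w 2 : ℚ) =
      (n.choose w : ℚ) *
        ((∑ j ∈ Finset.range (w + 1 - d), (-1 : ℚ) ^ j * (w.choose j : ℚ) *
            ((q : ℚ) ^ (w - d + 1 - j) * sphereVol q n 2 - sphereVol q (w - j) 2))
          - (-1 : ℚ) ^ (w + d) * (((n : ℚ) - (d : ℚ) + 1) * ((q : ℚ) - 1) / 2) *
              ((w.choose (d - 1) : ℚ) * (2 + ((q : ℚ) - 1) * ((n : ℚ) + (d : ℚ) - 2))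
                - (w.choose (d - 2) : ℚ) * ((n : ℚ) - (d : ℚ) + 2))) := by
  subst hq
  have hset : numVectorsCosetLe C w 2 =
      (((univ : Finset (Fin n → F)).filter (fun x => cosetWeight C x ≤ 2)).filter
        (fun x => hammingNorm x = w)).card := by
    unfold numVectorsCosetLe
    rw [← Set.ncard_coe_finset]
    congr 1
    ext x
    simp [and_comm]
  have hk0 : d ≤ n + 1 := by omega
  have hB := mobius ((univ : Finset (Fin n → F)).filter (fun x => cosetWeight C x ≤ 2))
    (cntN (Fintype.card F) n d)
    (fun S => by rw [card_B C hmin hd S, card_prs_eq C hk hmin hMDS hd S]) w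
  have hball := mobius ((univ : Finset (Fin n → F)).filter (fun x => hammingNorm x ≤ 2))
    (fun m => sphereVol (Fintype.card F) m 2)
    (fun S => card_ball S 2) w
  have hemp : (((univ : Finset (Fin n → F)).filter (fun x => hammingNorm x ≤ 2)).filter
      (fun x => hammingNorm x = w)).card = 0 := by
    rw [Finset.card_eq_zero, Finset.filter_eq_empty_iff]
    intro x hx
    simp only [mem_filter, mem_univ, true_and] at hx
    omega
  rw [hemp, Nat.cast_zero] at hball
  rw [hset, hB, ← final_sum (Fintype.card F) n d w hd hk0 hw1]
  simp_rw [mul_sub]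
  rw [Finset.sum_sub_distrib, mul_sub, ← hball, sub_zero]
end

section
/- Let C be an [n, k, d]_q MDS code with minimum distance d ≥ 5, and let w be a natural number with d - 2 ≤ w ≤ n. Then the overall number A_w^Σ(V^{(2)}) of Hamming-weight-w vectors lying in cosets of C of weight exactly 2 satisfies A_w^Σ(V^{(2)}) = C(n,w) (q-1)^2 · [ C(n,2) · ∑_{j=0}^{w+1-d} (-1)^j C(w,j) q^{w+1-d-j} + ε · C(w,2) C(w-3, d-4) ] + ε · C(n,w) C(w, d-2) C(n-d+2, 2) (q-1), as an identity of integers. -/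
open Finset

namespace MDSAux

set_option linter.unusedSectionVars false

theorem alt_choose (N r : ℕ) :
    ∑ i ∈ range (r + 1), (-1 : ℤ) ^ i * ((N + 1).choose i : ℤ) = (-1) ^ r * (N.choose r : ℤ) := by
  induction r with
  | zero => simp
  | succ r ih =>
    rw [sum_range_succ, ih, Nat.choose_succ_succ]
    push_cast
    ring

theorem arith (D t : ℕ) (hD : 3 ≤ D) (A B K Q : ℤ) (φ : ℕ → ℤ)
    (h1 : ∀ i, i < t → φ (D + 1 + i) = A * Q ^ i)
    (h2 : ∀ m, m < D → φ m = (m.choose 2 : ℤ) * B)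
    (h3 : φ D = (D.choose 2 : ℤ) * B + K) :
    ∑ m ∈ range (D + t + 1), ((D + t).choose m : ℤ) * ((-1) ^ (D + t - m) * φ m) =
      A * ∑ j ∈ range t, (-1) ^ j * ((D + t).choose j : ℤ) * Q ^ (t - 1 - j)
      + B * ((-1) ^ t * ((D + t).choose 2 : ℤ) * ((D + t - 3).choose (D - 2) : ℤ))
      + (-1) ^ t * ((D + t).choose D : ℤ) * K := by
  have e : D + t + 1 = (D + 1) + t := by ring
  rw [e, sum_range_add]
  have hup : ∑ x ∈ range t, ((D + t).choose (D + 1 + x) : ℤ) *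
      ((-1) ^ (D + t - (D + 1 + x)) * φ (D + 1 + x)) =
      A * ∑ j ∈ range t, (-1) ^ j * ((D + t).choose j : ℤ) * Q ^ (t - 1 - j) := by
    rw [← sum_range_reflect (fun j => (-1) ^ j * ((D + t).choose j : ℤ) * Q ^ (t - 1 - j)), mul_sum]
    refine sum_congr rfl fun i hi => ?_
    rw [mem_range] at hi
    rw [h1 i hi]
    have e1 : D + t - (D + 1 + i) = t - 1 - i := by omega
    have e2 : t - 1 - (t - 1 - i) = i := by omega
    have e3 : (D + t).choose (D + 1 + i) = (D + t).choose (t - 1 - i) := by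
      apply Nat.choose_symm_of_eq_add; omega
    rw [e1, e2, e3]; ring
  have hlow0 : ∑ m ∈ range (D + 1), ((D + t).choose m : ℤ) * ((-1) ^ (D + t - m) * φ m) =
      ∑ m ∈ range (D + 1), ((D + t).choose m : ℤ) * ((-1) ^ (D + t - m) * ((m.choose 2 : ℤ) * B))
      + (-1) ^ t * ((D + t).choose D : ℤ) * K := by
    rw [sum_range_succ, sum_range_succ, h3, Nat.add_sub_cancel_left]
    rw [sum_congr rfl fun m hm => by rw [h2 m (mem_range.1 hm)]]
    ring
  have hlow : ∑ m ∈ range (D + 1), ((D + t).choose m : ℤ) *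
      ((-1) ^ (D + t - m) * ((m.choose 2 : ℤ) * B)) =
      B * ((-1) ^ t * ((D + t).choose 2 : ℤ) * ((D + t - 3).choose (D - 2) : ℤ)) := by
    obtain ⟨r, rfl⟩ : ∃ r, D = r + 2 := ⟨D - 2, by omega⟩
    obtain ⟨N, hN⟩ : ∃ N, r + 2 + t = N + 3 := ⟨r + t - 1, by omega⟩
    rw [show r + 2 + 1 = (r + 1) + 1 + 1 by ring, sum_range_succ', sum_range_succ']
    have e0 : (Nat.choose 0 2 : ℤ) = 0 := by norm_num
    have e1 : (Nat.choose (0+1) 2 : ℤ) = 0 := by norm_num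
    simp only [e0, e1, zero_mul, mul_zero, add_zero]
    have hs : ((-1 : ℤ)) ^ t = (-1) ^ (r + N + 1) := by
      have : r + N + 1 = t + 2 * r := by omega
      rw [this, pow_add, pow_mul]; simp
    have := alt_choose N r
    rw [hN, Nat.add_sub_cancel, Nat.add_sub_cancel]
    calc _ = ∑ i ∈ range (r + 1), (B * (-1) ^ (N + 1) * ((N + 3).choose 2 : ℤ)) *
          ((-1 : ℤ) ^ i * ((N + 1).choose i : ℤ)) := by
          refine sum_congr rfl fun i hi => ?_
          have hi' := mem_range.1 hi
          have hc : (N + 3).choose (i + 1 + 1) * (i + 1 + 1).choose 2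
              = (N + 3).choose 2 * (N + 1).choose i := by
            rw [Nat.choose_mul (by omega : (2:ℕ) ≤ i + 1 + 1)]
            rfl
          have hc' : ((N + 3).choose (i + 1 + 1) : ℤ) * ((i + 1 + 1).choose 2 : ℤ)
              = ((N + 3).choose 2 : ℤ) * ((N + 1).choose i : ℤ) := by exact_mod_cast hc
          have hp : (-1 : ℤ) ^ (N + 3 - (i + 1 + 1)) = (-1) ^ (N + 1) * (-1) ^ i := by
            obtain ⟨u, hu⟩ : ∃ u, N + 1 = i + u := ⟨N + 1 - i, by omega⟩
            have : N + 3 - (i + 1 + 1) = u := by omega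
            rw [this, hu, pow_add, mul_right_comm, ← mul_pow]; simp
          rw [hp]
          linear_combination ((-1) ^ (N + 1) * (-1) ^ i * B) * hc'
      _ = _ := by
          rw [← mul_sum, this, hs]; ring
  rw [hlow0, hlow, hup]; ring

variable {F : Type*} [Field F] [Fintype F] [DecidableEq F] {n : ℕ}

/-- support -/
def supp (x : Fin n → F) : Finset (Fin n) := univ.filter fun i => x i ≠ 0

theorem mem_supp (x : Fin n → F) (i) : i ∈ supp x ↔ x i ≠ 0 := by simp [supp]

theorem norm_eq (x : Fin n → F) : hammingNorm x = #(supp x) := rfl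

theorem supp_sub (x y : Fin n → F) : supp (x - y) ⊆ supp x ∪ supp y := by
  intro i
  simp only [mem_union, mem_supp, Pi.sub_apply]
  contrapose!
  rintro ⟨a, b⟩; simp [a, b]

theorem supp_neg_sub (x y : Fin n → F) : supp (x - y) = supp (y - x) := by
  ext i; simp only [mem_supp, Pi.sub_apply, sub_ne_zero]; exact ne_comm

theorem card_supp_eq (T : Finset (Fin n)) :
    #{e : Fin n → F | supp e = T} = (Fintype.card F - 1) ^ #T := by
  have : ({e : Fin n → F | supp e = T} : Finset _) =
      Fintype.piFinset (fun i => if i ∈ T then univ.erase (0 : F) else {0}) := by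
    ext e
    simp only [mem_filter, mem_univ, true_and, Fintype.mem_piFinset, Finset.ext_iff, mem_supp]
    refine forall_congr' fun i => ?_
    by_cases h : i ∈ T <;> simp [h]
  rw [this, Fintype.card_piFinset]
  simp only [apply_ite Finset.card, card_singleton, prod_ite, prod_const_one, mul_one, prod_const]
  rw [card_erase_of_mem (mem_univ _), card_univ]
  congr 2; ext i; simp

theorem card_wt_two (S : Finset (Fin n)) :
    #{e : Fin n → F | hammingNorm e = 2 ∧ supp e ⊆ S} = (#S).choose 2 * (Fintype.card F - 1) ^ 2 := by
  rw [card_eq_sum_card_fiberwise (f := supp) (t := powersetCard 2 S)]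
  · rw [← card_powersetCard 2 S, ← smul_eq_mul, ← sum_const]
    refine sum_congr rfl fun T hT => ?_
    rw [mem_powersetCard] at hT
    rw [← hT.2, ← card_supp_eq, filter_filter]
    congr 1; ext e
    simp only [mem_filter, mem_univ, true_and]
    rw [norm_eq]
    constructor
    · exact fun h => h.2
    · rintro rfl; exact ⟨⟨rfl, hT.1⟩, rfl⟩
  · intro e he
    simp only [coe_filter, mem_univ, true_and, Set.mem_ofPred_eq] at he
    rw [norm_eq] at he
    simpa [mem_powersetCard] using he.symm

variable (C : Submodule F (Fin n → F)) [DecidablePred (· ∈ C)]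

/-- restriction -/
def res (T : Finset (Fin n)) : C →ₗ[F] (T → F) :=
  (LinearMap.funLeft F F (Subtype.val : T → Fin n)).comp C.subtype

theorem res_apply (T : Finset (Fin n)) (c : C) (i : T) : res C T c i = (c : Fin n → F) i := rfl

theorem res_surj {d k : ℕ} (hk : Module.finrank F C = k)
    (hmin : ∀ c ∈ C, c ≠ 0 → d ≤ hammingNorm c) (hMDS : d + k = n + 1)
    (T : Finset (Fin n)) (hT : #T ≤ k) : Function.Surjective (res C T) := by
  by_cases hkn : n < k
  · have := Submodule.finrank_le C
    simp at this; omega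
  obtain ⟨T', hTT, -, hc⟩ := exists_subsuperset_card_eq (subset_univ T) hT (by simp; omega)
  have hinj : Function.Injective (res C T') := by
    rw [← LinearMap.ker_eq_bot, LinearMap.ker_eq_bot']
    intro c hc0
    by_contra hne
    have h1 := hmin c c.2 (by simpa using hne)
    have h2 : supp (c : Fin n → F) ⊆ T'ᶜ := by
      intro i hi
      rw [mem_compl]; intro hi'
      exact (mem_supp _ _).1 hi (congrFun hc0 ⟨i, hi'⟩)
    have h3 := card_le_card h2
    rw [card_compl, Fintype.card_fin, ← norm_eq] at h3
    omega
  have hs : Function.Surjective (res C T') :=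
    (LinearMap.injective_iff_surjective_of_finrank_eq_finrank (by simp [hk, hc])).1 hinj
  intro y
  obtain ⟨c, hc⟩ := hs (fun i => if h : (i : Fin n) ∈ T then y ⟨i, h⟩ else 0)
  refine ⟨c, ?_⟩
  ext i
  have := congrFun hc ⟨i, hTT i.2⟩
  rw [res_apply] at this ⊢
  rw [this]; simp

theorem fiber_card {d k : ℕ} (hk : Module.finrank F C = k)
    (hmin : ∀ c ∈ C, c ≠ 0 → d ≤ hammingNorm c) (hMDS : d + k = n + 1)
    (T : Finset (Fin n)) (hT : #T ≤ k) (y : Fin n → F) :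
    #{c : Fin n → F | c ∈ C ∧ ∀ i ∈ T, c i = y i} = Fintype.card F ^ (k - #T) := by
  have hs := res_surj C hk hmin hMDS T hT
  have hcard : Fintype.card C = Fintype.card F ^ k := by
    rw [← hk]; exact Module.card_eq_pow_finrank
  have h1 : ∀ z : T → F, #{c : C | res C T c = z} = #{c : C | res C T c = fun i : T => y i} := by
    intro z
    exact AddMonoidHom.card_fiber_eq_of_mem_range (res C T).toAddMonoidHom (hs _) (hs _)
  have h2 : Fintype.card C = Fintype.card F ^ #T * #{c : C | res C T c = fun i : T => y i} := by
    rw [← card_univ, card_eq_sum_card_fiberwise (f := res C T) (t := univ) (by simp)]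
    rw [sum_congr rfl fun z _ => h1 z]
    simp
  have h3 : #{c : Fin n → F | c ∈ C ∧ ∀ i ∈ T, c i = y i} = #{c : C | res C T c = fun i : T => y i} := by
    symm
    refine card_bij (fun c _ => (c : Fin n → F)) ?_ ?_ ?_
    · intro c hc
      simp only [mem_filter, mem_univ, true_and] at hc ⊢
      exact ⟨c.2, fun i hi => congrFun hc ⟨i, hi⟩⟩
    · intro a _ b _ h; exact Subtype.ext h
    · intro b hb
      simp only [mem_filter, mem_univ, true_and] at hb
      refine ⟨⟨b, hb.1⟩, ?_, rfl⟩
      simp only [mem_filter, mem_univ, true_and]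
      ext i; exact hb.2 i i.2
  rw [h3]
  have hpos : 0 < Fintype.card F ^ #T := pow_pos Fintype.card_pos _
  apply Nat.eq_of_mul_eq_mul_left hpos
  rw [← h2, hcard, ← pow_add]; congr 1; omega

/-- pairs -/
def P : Finset ((Fin n → F) × (Fin n → F)) :=
  univ.filter fun p => hammingNorm p.1 = 2 ∧ p.2 - p.1 ∈ C

/-- count -/
def f (S : Finset (Fin n)) : ℕ := #{p ∈ P C | supp p.2 ⊆ S}

theorem f_big {d k : ℕ} (hk : Module.finrank F C = k)
    (hmin : ∀ c ∈ C, c ≠ 0 → d ≤ hammingNorm c) (hMDS : d + k = n + 1)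
    (S : Finset (Fin n)) (hS : d ≤ #S + 1) :
    f C S = n.choose 2 * (Fintype.card F - 1) ^ 2 * Fintype.card F ^ (#S + 1 - d) := by
  have hE := card_wt_two (F := F) (univ : Finset (Fin n))
  simp only [subset_univ, and_true, card_univ, Fintype.card_fin] at hE
  have hSn : #S ≤ n := by simpa using card_le_univ S
  rw [f, card_eq_sum_card_fiberwise (f := Prod.fst) (t := {e : Fin n → F | hammingNorm e = 2}),
    ← hE, ← smul_eq_mul, ← sum_const]
  · refine sum_congr rfl fun e he => ?_
    simp only [mem_filter, mem_univ, true_and] at he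
    have := fiber_card C hk hmin hMDS Sᶜ (by rw [card_compl, Fintype.card_fin]; omega) (-e)
    rw [card_compl, Fintype.card_fin, show k - (n - #S) = #S + 1 - d by omega] at this
    rw [← this]
    refine card_bij' (fun p _ => p.2 - p.1) (fun c _ => (e, c + e)) ?_ ?_ ?_ ?_
    · rintro ⟨a, x⟩ h
      simp only [P, mem_filter, mem_univ, true_and] at h ⊢
      obtain ⟨⟨⟨-, h2⟩, h3⟩, rfl⟩ := h
      refine ⟨h2, fun i hi => ?_⟩
      have : x i = 0 := by
        by_contra h; exact mem_compl.1 hi (h3 ((mem_supp _ _).2 h))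
      simp [this]
    · intro c h
      simp only [P, mem_filter, mem_univ, true_and] at h ⊢
      refine ⟨⟨⟨he, by simpa using h.1⟩, fun i hi => ?_⟩, trivial⟩
      by_contra hi'
      exact (mem_supp _ _).1 hi (by simp [h.2 i (mem_compl.2 hi')])
    · rintro ⟨a, x⟩ h
      simp only [P, mem_filter, mem_univ, true_and] at h ⊢
      obtain ⟨⟨⟨-, h2⟩, h3⟩, rfl⟩ := h
      simp
    · intro c h; simp
  · rintro ⟨a, x⟩ h
    simp only [P, coe_filter, mem_filter, mem_univ, true_and, Set.mem_ofPred_eq] at h ⊢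
    exact h.1.1

theorem f_split (S : Finset (Fin n)) :
    f C S = (#S).choose 2 * (Fintype.card F - 1) ^ 2 +
      #{p ∈ P C | supp p.2 ⊆ S ∧ p.2 ≠ p.1} := by
  rw [f, ← card_filter_add_card_filter_not (s := {p ∈ P C | supp p.2 ⊆ S}) (fun p => p.2 = p.1),
    filter_filter, filter_filter, ← card_wt_two]
  congr 1
  refine card_bij' (fun p _ => p.1) (fun e _ => (e, e)) ?_ ?_ ?_ ?_
  · rintro ⟨a, x⟩ h
    simp only [P, mem_filter, mem_univ, true_and] at h ⊢
    obtain ⟨⟨h1, h2⟩, h3, rfl⟩ := h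
    exact ⟨h1, h3⟩
  · intro e h
    simp only [P, mem_filter, mem_univ, true_and] at h ⊢
    exact ⟨⟨h.1, by simp⟩, h.2, trivial⟩
  · rintro ⟨a, x⟩ h
    simp only [mem_filter] at h
    simp [h.2.2]
  · intro e h; rfl

theorem pair_card {d : ℕ}
    (hmin : ∀ c ∈ C, c ≠ 0 → d ≤ hammingNorm c)
    (S : Finset (Fin n)) (e x : Fin n → F) (hx : supp x ⊆ S) (he : hammingNorm e = 2)
    (hc : x - e ∈ C) (hne : x ≠ e) : d ≤ #(S ∪ supp e) := by
  refine (hmin _ hc (sub_ne_zero.2 hne)).trans ?_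
  rw [norm_eq]
  exact card_le_card ((supp_sub x e).trans (union_subset_union_left hx))

theorem f_small {d : ℕ}
    (hmin : ∀ c ∈ C, c ≠ 0 → d ≤ hammingNorm c)
    (S : Finset (Fin n)) (hS : #S + 2 < d) :
    f C S = (#S).choose 2 * (Fintype.card F - 1) ^ 2 := by
  rw [f_split, Nat.add_eq_left, card_eq_zero, filter_eq_empty_iff]
  rintro ⟨e, x⟩ h ⟨h1, h2⟩
  simp only [P, mem_filter, mem_univ, true_and] at h h1 h2
  have := pair_card C hmin S e x h1 h.1 h.2 h2
  have h3 := card_union_le S (supp e)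
  rw [← norm_eq, h.1] at h3
  omega

theorem f_mid {d k : ℕ} (hk : Module.finrank F C = k)
    (hmin : ∀ c ∈ C, c ≠ 0 → d ≤ hammingNorm c) (hMDS : d + k = n + 1) (hk1 : 1 ≤ k)
    (S : Finset (Fin n)) (hS : #S + 2 = d) :
    f C S = (#S).choose 2 * (Fintype.card F - 1) ^ 2 +
      (n - #S).choose 2 * (Fintype.card F - 1) := by
  rw [f_split]
  congr 1
  rw [card_eq_sum_card_fiberwise (f := fun p => supp p.1) (t := powersetCard 2 Sᶜ)]
  · have : (n - #S).choose 2 = #(powersetCard 2 Sᶜ) := by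
      rw [card_powersetCard, card_compl, Fintype.card_fin]
    rw [this, ← smul_eq_mul, ← sum_const]
    refine sum_congr rfl fun T hT => ?_
    rw [mem_powersetCard] at hT
    have hdisj : Disjoint S T := by
      rw [Finset.disjoint_left]; intro i hi hi'; exact mem_compl.1 (hT.1 hi') hi
    have hST : #(S ∪ T) = d := by rw [card_union_of_disjoint hdisj, hT.2, hS]
    have hcc : #(S ∪ T)ᶜ = k - 1 := by rw [card_compl, Fintype.card_fin]; omega
    have hfc := fiber_card C hk hmin hMDS (S ∪ T)ᶜ (by omega) 0
    rw [hcc, show k - (k - 1) = 1 by omega, pow_one] at hfc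
    rw [← hfc, ← card_erase_of_mem (a := 0) (by simp)]
    refine card_bij' (fun p _ => p.2 - p.1)
      (fun c _ => (fun i => if i ∈ T then - c i else 0, fun i => if i ∈ S then c i else 0))
      ?_ ?_ ?_ ?_
    · rintro ⟨e, x⟩ h
      simp only [P, mem_filter, mem_univ, true_and, mem_erase] at h ⊢
      obtain ⟨⟨⟨h1, h2⟩, h3, h4⟩, rfl⟩ := h
      refine ⟨sub_ne_zero.2 h4, h2, fun i hi => ?_⟩
      by_contra hh
      exact mem_compl.1 hi (union_subset_union_left h3 (supp_sub x e ((mem_supp _ _).2 hh)))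
    · intro c h
      simp only [P, mem_filter, mem_univ, true_and, mem_erase] at h ⊢
      obtain ⟨h0, hc, hz⟩ := h
      have hsub : supp c ⊆ S ∪ T := by
        intro i hi
        by_contra hh; exact (mem_supp _ _).1 hi (hz i (mem_compl.2 hh))
      have hsc : supp c = S ∪ T := by
        apply eq_of_subset_of_card_le hsub
        rw [hST]; exact hmin c hc h0
      have hsupp : supp (fun i => if i ∈ T then - c i else 0) = T := by
        ext i
        rw [mem_supp]
        by_cases hi : i ∈ T
        · have : i ∈ supp c := by rw [hsc]; exact mem_union_right _ hi
          simpa [hi] using (mem_supp _ _).1 this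
        · simp [hi]
      have hsubc : ((fun i => if i ∈ S then c i else 0) - fun i => if i ∈ T then - c i else 0) = c := by
        ext i
        by_cases hi : i ∈ S
        · simp [hi, Finset.disjoint_left.1 hdisj hi]
        · by_cases hi' : i ∈ T
          · simp [hi, hi']
          · have : c i = 0 := hz i (by simp [hi, hi'])
            simp [hi, hi', this]
      refine ⟨⟨⟨by rw [norm_eq, hsupp, hT.2], by rw [hsubc]; exact hc⟩, ?_, ?_⟩, hsupp⟩
      · intro i hi
        by_contra hh; exact (mem_supp _ _).1 hi (by simp [hh])
      · rw [← sub_ne_zero, hsubc]; exact h0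
    · rintro ⟨e, x⟩ h
      simp only [P, mem_filter, mem_univ, true_and] at h ⊢
      obtain ⟨⟨⟨h1, h2⟩, h3, h4⟩, rfl⟩ := h
      have hxz : ∀ i, i ∉ S → x i = 0 := fun i hi => by
        by_contra hh; exact hi (h3 ((mem_supp _ _).2 hh))
      have hez : ∀ i, i ∉ supp e → e i = 0 := fun i hi => by
        by_contra hh; exact hi ((mem_supp _ _).2 hh)
      refine Prod.ext ?_ ?_
      · ext i
        by_cases hi : i ∈ supp e
        · simp [hi, hxz i (Finset.disjoint_right.1 hdisj hi)]
        · simp [hi, hez i hi]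
      · ext i
        by_cases hi : i ∈ S
        · simp [hi, hez i (Finset.disjoint_left.1 hdisj hi)]
        · simp [hi, hxz i hi]
    · intro c h
      simp only [mem_filter, mem_univ, true_and, mem_erase] at h
      obtain ⟨h0, hc, hz⟩ := h
      ext i
      by_cases hi : i ∈ S
      · simp [hi, Finset.disjoint_left.1 hdisj hi]
      · by_cases hi' : i ∈ T
        · simp [hi, hi']
        · have : c i = 0 := hz i (by simp [hi, hi'])
          simp [hi, hi', this]
  · rintro ⟨e, x⟩ h
    simp only [P, coe_filter, mem_filter, mem_univ, true_and, Set.mem_ofPred_eq, mem_coe,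
      mem_powersetCard] at h ⊢
    obtain ⟨⟨h1, h2⟩, h3, h4⟩ := h
    have hp := pair_card C hmin S e x h3 h1 h2 h4
    rw [norm_eq] at h1
    refine ⟨?_, h1⟩
    have : #(S ∪ supp e) = #S + #(supp e) := by
      have := card_union_le S (supp e); omega
    rw [card_union_eq_card_add_card] at this
    intro i hi
    exact mem_compl.2 (Finset.disjoint_right.1 this hi)

theorem incl_excl (W A : Finset (Fin n)) :
    (if A = W then (1 : ℤ) else 0) =
      ∑ S ∈ W.powerset, (-1) ^ (#W - #S) * (if A ⊆ S then (1 : ℤ) else 0) := by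
  by_cases hA : A ⊆ W
  · have h := prod_add (fun _ => (1 : ℤ)) (fun i => if i ∈ A then (0 : ℤ) else -1) W
    have h1 : ∏ i ∈ W, ((1 : ℤ) + if i ∈ A then (0 : ℤ) else -1) = if A = W then (1 : ℤ) else 0 := by
      split_ifs with hAW
      · subst hAW; exact prod_eq_one fun i hi => by simp [hi]
      · obtain ⟨i, hi, hi'⟩ := exists_of_ssubset (hA.ssubset_of_ne hAW)
        exact prod_eq_zero hi (by simp [hi'])
    rw [← h1, h]
    refine sum_congr rfl fun S hS => ?_
    have hS' := mem_powerset.1 hS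
    rw [prod_const_one, one_mul, ← card_sdiff_of_subset hS']
    split_ifs with hAS
    · rw [mul_one, ← prod_const]
      refine prod_congr rfl fun i hi => ?_
      rw [if_neg (fun hh => (mem_sdiff.1 hi).2 (hAS hh))]
    · obtain ⟨i, hi, hi'⟩ := not_subset.1 hAS
      rw [mul_zero]
      exact prod_eq_zero (mem_sdiff.2 ⟨hA hi, hi'⟩) (by simp [hi])
  · rw [if_neg (fun h => hA h.subset)]
    symm
    refine sum_eq_zero fun S hS => ?_
    rw [if_neg (fun h => hA (h.trans (mem_powerset.1 hS))), mul_zero]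

theorem exact_count (w : ℕ) (φ : ℕ → ℤ) (hφ : ∀ S : Finset (Fin n), (f C S : ℤ) = φ #S) :
    (#{p ∈ P C | hammingNorm p.2 = w} : ℤ) =
      n.choose w * ∑ m ∈ range (w + 1), (w.choose m : ℤ) * ((-1) ^ (w - m) * φ m) := by
  rw [card_eq_sum_card_fiberwise (f := fun p => supp p.2) (t := powersetCard w univ)]
  · have : (n.choose w : ℤ) = #(powersetCard w (univ : Finset (Fin n))) := by
      rw [card_powersetCard, card_univ, Fintype.card_fin]
    rw [this, ← nsmul_eq_mul, ← sum_const, Nat.cast_sum]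
    refine sum_congr rfl fun W hW => ?_
    rw [mem_powersetCard] at hW
    have h1 : {p ∈ {p ∈ P C | hammingNorm p.2 = w} | supp p.2 = W} = {p ∈ P C | supp p.2 = W} := by
      rw [filter_filter]
      refine filter_congr fun p _ => ?_
      rw [norm_eq]
      exact ⟨fun h => h.2, fun h => ⟨by rw [h, hW.2], h⟩⟩
    rw [h1, card_filter]
    push_cast
    rw [sum_congr rfl fun p _ => incl_excl W (supp p.2), sum_comm]
    have h2 : ∀ S ∈ W.powerset, (∑ p ∈ P C, (-1 : ℤ) ^ (#W - #S) * (if supp p.2 ⊆ S then (1 : ℤ) else 0))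
        = (fun m => (-1 : ℤ) ^ (#W - m) * φ m) #S := by
      intro S _
      simp only [← mul_sum, ← hφ, f, card_filter]
      push_cast; rfl
    rw [sum_congr rfl h2, sum_powerset_apply_card (fun m => (-1 : ℤ) ^ (#W - m) * φ m), hW.2]
    simp
  · intro p hp
    simp only [coe_filter, Set.mem_ofPred_eq] at hp
    rw [norm_eq] at hp
    simp [mem_powersetCard, hp.2]


theorem uniq {d : ℕ} (hd : 5 ≤ d) (hmin : ∀ c ∈ C, c ≠ 0 → d ≤ hammingNorm c)
    (x a b : Fin n → F) (ha : hammingNorm a ≤ 2) (hb : hammingNorm b ≤ 2)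
    (hxa : x - a ∈ C) (hxb : x - b ∈ C) : a = b := by
  by_contra hne
  have h1 : a - b ∈ C := by
    have := C.sub_mem hxb hxa
    rwa [sub_sub_sub_cancel_left] at this
  have h2 := hmin _ h1 (sub_ne_zero.2 hne)
  have h3 := (card_le_card (supp_sub a b)).trans (card_union_le _ _)
  rw [norm_eq] at ha hb h2
  omega

theorem coset_two {d : ℕ} (hd : 5 ≤ d) (hmin : ∀ c ∈ C, c ≠ 0 → d ≤ hammingNorm c)
    (x : Fin n → F) : cosetWeight C x = 2 ↔ ∃ e, hammingNorm e = 2 ∧ x - e ∈ C := by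
  have hne : {m : ℕ | ∃ c ∈ C, hammingNorm (x - c) = m}.Nonempty := ⟨_, 0, C.zero_mem, rfl⟩
  obtain ⟨c, hc, hcm⟩ := Nat.sInf_mem hne
  change hammingNorm (x - c) = cosetWeight C x at hcm
  constructor
  · intro h
    exact ⟨x - c, by rw [hcm, h], by simpa using hc⟩
  · rintro ⟨e, he, hxe⟩
    have hle : cosetWeight C x ≤ 2 := Nat.sInf_le ⟨x - e, hxe, by simpa using he⟩
    have := uniq C hd hmin x (x - c) e (by omega) (by omega) (by simpa using hc) hxe
    rw [← hcm, this, he]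

theorem num_eq {d : ℕ} (hd : 5 ≤ d) (hmin : ∀ c ∈ C, c ≠ 0 → d ≤ hammingNorm c) (w : ℕ) :
    numVectorsCosetExact C w 2 = #{p ∈ P C | hammingNorm p.2 = w} := by
  rw [numVectorsCosetExact, ← card_image_of_injOn (f := Prod.snd), ← Set.ncard_coe_finset]
  · congr 1
    ext x
    simp only [Set.mem_ofPred_eq, coset_two C hd hmin, P, coe_image, coe_filter, Set.mem_image,
      mem_filter, mem_univ, true_and, Prod.exists, exists_eq_right]
    constructor
    · rintro ⟨h, e, h1, h2⟩; exact ⟨e, ⟨h1, h2⟩, h⟩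
    · rintro ⟨e, ⟨h1, h2⟩, h⟩; exact ⟨h, e, h1, h2⟩
  · rintro ⟨a, x⟩ h ⟨b, y⟩ h' hxy
    simp only [P, coe_filter, mem_filter, mem_univ, true_and, Set.mem_ofPred_eq] at h h' hxy
    subst hxy
    rw [uniq C hd hmin x a b h.1.1.le h'.1.1.le h.1.2 h'.1.2]

end MDSAux

/-- **Integral weight spectrum of the weight-2 cosets of an MDS code** (Theorem 5.3(i),
eq. (5.5)).  For an `[n,k,d]_q` MDS code with `d ≥ 5` and `d-2 ≤ w ≤ n`,
`A_w^Σ(V^{(2)}) = C(n,w)(q-1)²[ C(n,2) ∑_{j=0}^{w+1-d} (-1)^j C(w,j) q^{w+1-d-j}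
  + (-1)^{w-d} C(w,2) C(w-3,d-4) ]
  + (-1)^{w-d} C(n,w) C(w,d-2) C(n-d+2,2) (q-1)`. -/
theorem numVectorsCosetExact_two_eq {F : Type*} [Field F] [Fintype F] [DecidableEq F]
    (q n k d w : ℕ) (hq : Fintype.card F = q)
    (C : Submodule F (Fin n → F))
    (hk : Module.finrank F C = k) (hmin : HasMinDist C d) (hMDS : d + k = n + 1)
    (hd : 5 ≤ d) (hw1 : d - 2 ≤ w) (hwn : w ≤ n) :
    (numVectorsCosetExact C w 2 : ℤ) =
      (n.choose w : ℤ) * ((q : ℤ) - 1) ^ 2 *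
        ((n.choose 2 : ℤ) * ∑ j ∈ Finset.range (w + 2 - d),
            (-1 : ℤ) ^ j * (w.choose j : ℤ) * (q : ℤ) ^ (w + 1 - d - j)
          + (-1 : ℤ) ^ (w + d) * (w.choose 2 : ℤ) * ((w - 3).choose (d - 4) : ℤ))
      + (-1 : ℤ) ^ (w + d) * (n.choose w : ℤ) * (w.choose (d - 2) : ℤ) *
          ((n - d + 2).choose 2 : ℤ) * ((q : ℤ) - 1) := by
  classical
  have hm := hmin.1
  have hk1 : 1 ≤ k := by
    obtain ⟨c, hc, hc0, -⟩ := hmin.2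
    have : 0 < Module.finrank F C := Module.finrank_pos_iff_exists_ne_zero.2
      ⟨⟨c, hc⟩, fun h => hc0 (congrArg Subtype.val h)⟩
    omega
  have hq1 : 1 ≤ q := by rw [← hq]; exact Fintype.card_pos
  obtain ⟨D, rfl⟩ : ∃ D, d = D + 2 := ⟨d - 2, by omega⟩
  obtain ⟨t, rfl⟩ : ∃ t, w = D + t := ⟨w - D, by omega⟩
  let φ : ℕ → ℤ := fun m =>
    if m < D then (m.choose 2 : ℤ) * ((q : ℤ) - 1) ^ 2
    else if m = D then (m.choose 2 : ℤ) * ((q : ℤ) - 1) ^ 2 + ((n - D).choose 2 : ℤ) * ((q : ℤ) - 1)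
    else (n.choose 2 : ℤ) * ((q : ℤ) - 1) ^ 2 * (q : ℤ) ^ (m + 1 - (D + 2))
  have hφ : ∀ S : Finset (Fin n), (MDSAux.f C S : ℤ) = φ #S := by
    intro S
    simp only [φ]
    split_ifs with h1 h2
    · rw [MDSAux.f_small C hm S (by omega), hq]
      push_cast [hq1]; ring
    · rw [MDSAux.f_mid C hk hm hMDS hk1 S (by omega), hq, h2]
      push_cast [hq1]; ring
    · rw [MDSAux.f_big C hk hm hMDS S (by omega), hq]
      push_cast [hq1]; ring
  rw [MDSAux.num_eq C hd hm, MDSAux.exact_count C (D + t) φ hφ,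
    MDSAux.arith D t (by omega) ((n.choose 2 : ℤ) * ((q : ℤ) - 1) ^ 2) (((q : ℤ) - 1) ^ 2)
      (((n - D).choose 2 : ℤ) * ((q : ℤ) - 1)) q φ]
  · have e1 : D + t + 2 - (D + 2) = t := by omega
    have e2 : ∀ j, D + t + 1 - (D + 2) - j = t - 1 - j := fun j => by omega
    have e3 : D + 2 - 4 = D - 2 := by omega
    have e4 : n - (D + 2) + 2 = n - D := by omega
    have e5 : (-1 : ℤ) ^ (D + t + (D + 2)) = (-1) ^ t := by
      rw [show D + t + (D + 2) = t + 2 * (D + 1) by ring, pow_add, pow_mul]; simp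
    rw [e1, e3, e4, e5, Nat.add_sub_cancel]
    simp only [e2]
    ring
  · intro i hi
    simp only [φ]
    rw [if_neg (by omega), if_neg (by omega), show D + 1 + i + 1 - (D + 2) = i by omega]
  · intro m hm'
    simp only [φ]; rw [if_pos hm']
  · simp [φ]
end

section
/- Let C be an [n, k, d]_q MDS code with minimum distance d ≥ 5, and let w be a natural number with d - 2 ≤ w ≤ n. Then the overall number A_w^Σ(V^{(2)}) of Hamming-weight-w vectors lying in cosets of C of weight exactly 2 satisfies A_w^Σ(V^{(2)}) = C(n,2) (q-1)^2 · [ A_w(C) - ε · ( C(n,w) C(w-1, d-2) - C(n-2, w-2) C(w-3, d-4) ) ] + ε · C(n,2) (q-1) · C(n-d+2, n-w) · C(n-2, d-2), as an identity of integers. -/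
open Finset

/-- Number of codewords with support inside an `s`-set. -/
def mdsB (q d : ℕ) (s : ℕ) : ℤ := (q : ℤ) ^ (s + 1 - d)

/-- Number of codewords with support equal to a `w`-set. -/
def mdsG (q d : ℕ) (w : ℕ) : ℤ := (fwdDiff (1 : ℕ))^[w] (mdsB q d) 0

lemma mdsG_sum (q d s : ℕ) :
    ∑ j ∈ range (s + 1), s.choose j • mdsG q d j = mdsB q d s := by
  have := shift_eq_sum_fwdDiff_iter (1 : ℕ) (mdsB q d) s 0
  simp only [smul_eq_mul, mul_one, zero_add] at this
  exact this.symm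

lemma fwdDiff_ind (v m : ℕ) :
    (fwdDiff (1 : ℕ))^[v + 1] (fun s : ℕ => if s < m + 1 then (1 : ℤ) else 0) 0
      = (-1) ^ (v + 1 + m) * (v.choose m : ℤ) := by
  rw [fwdDiff_iter_eq_sum_shift]
  have h1 : ∀ k ∈ range (v + 1 + 1), (((-1 : ℤ) ^ (v + 1 - k) * ((v + 1).choose k : ℤ)) •
      (if 0 + k • 1 < m + 1 then (1 : ℤ) else 0)) =
      if k < m + 1 then (-1 : ℤ) ^ (v + 1) * ((-1) ^ k * ((v + 1).choose k : ℤ)) else 0 := by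
    intro k hk
    have hk : k ≤ v + 1 := by simpa [Nat.lt_succ_iff] using hk
    simp only [smul_eq_mul, mul_one, zero_add]
    split_ifs
    · obtain ⟨t, ht⟩ := Nat.exists_eq_add_of_le hk
      rw [show v + 1 - k = t by omega, ht, pow_add]
      have : (-1 : ℤ) ^ k * (-1) ^ k = 1 := by rw [← mul_pow]; simp
      linear_combination (-((-1 : ℤ) ^ t * ((k + t).choose k : ℤ))) * this
    · simp
  rw [sum_congr rfl h1, pow_add _ (v + 1) m, mul_assoc, ← Int.alternating_sum_range_choose_eq_choose, mul_sum,
    ← sum_filter]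
  apply sum_subset
  · intro k; simp
  · intro k hk hk2
    simp only [mem_filter, mem_range, not_and] at hk hk2
    rw [Nat.choose_eq_zero_of_lt (by omega)]; simp

lemma mdsG_succ (q d w : ℕ) (hd : 2 ≤ d) (hw : 1 ≤ w) :
    mdsG q d (w + 1) = ((q : ℤ) - 1) *
      (mdsG q d w - (-1) ^ (w + d) * ((w - 1).choose (d - 2) : ℤ)) := by
  obtain ⟨v, rfl⟩ := Nat.exists_eq_add_of_le' hw
  obtain ⟨m, rfl⟩ := Nat.exists_eq_add_of_le' hd
  have h : fwdDiff (1 : ℕ) (mdsB q (m + 2)) = ((q : ℤ) - 1) • mdsB q (m + 2) +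
      (-((q : ℤ) - 1)) • (fun s : ℕ => if s < m + 1 then (1 : ℤ) else 0) := by
    ext s
    simp only [fwdDiff, mdsB, Pi.add_apply, Pi.smul_apply, smul_eq_mul]
    split_ifs with hs
    · rw [show s + 1 + 1 - (m + 2) = 0 by omega, show s + 1 - (m + 2) = 0 by omega]; ring
    · rw [show s + 1 + 1 - (m + 2) = s + 1 - (m + 2) + 1 by omega]; ring
  unfold mdsG
  rw [Function.iterate_succ_apply, h, fwdDiff_iter_add, fwdDiff_iter_const_smul,
    fwdDiff_iter_const_smul]
  simp only [Pi.add_apply, Pi.smul_apply, smul_eq_mul]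
  rw [fwdDiff_ind]
  simp only [Nat.add_sub_cancel]
  ring

/-- Support of a vector. -/
def vsupp {F : Type*} [Field F] [DecidableEq F] {n : ℕ} (x : Fin n → F) : Finset (Fin n) :=
  univ.filter (fun i => x i ≠ 0)

section
variable {F : Type*} [Field F] [Fintype F] [DecidableEq F] {n : ℕ}

open Classical in
lemma card_supp_subset (q k d : ℕ) (hq : Fintype.card F = q)
    (C : Submodule F (Fin n → F))
    (hk : Module.finrank F C = k) (hmin : HasMinDist C d) (hMDS : d + k = n + 1)
    (S : Finset (Fin n)) :
    (((univ : Finset (Fin n → F)).filter (fun c => c ∈ C ∧ vsupp c ⊆ S)).card : ℤ)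
      = mdsB q d S.card := by
  set K : Submodule F (Fin n → F) := 
    { carrier := {c | c ∈ C ∧ ∀ i, i ∉ S → c i = 0}
      add_mem' := by
        rintro a b ⟨ha, ha'⟩ ⟨hb, hb'⟩
        exact ⟨C.add_mem ha hb, fun i hi => by simp [ha' i hi, hb' i hi]⟩
      zero_mem' := ⟨C.zero_mem, by simp⟩
      smul_mem' := by
        rintro a b ⟨hb, hb'⟩
        exact ⟨C.smul_mem _ hb, fun i hi => by simp [hb' i hi]⟩ } with hK
  have hmem : ∀ c, c ∈ K ↔ (c ∈ C ∧ ∀ i, i ∉ S → c i = 0) := fun c => Iff.rfl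
  have hdn : d ≤ n := by
    obtain ⟨c, _, _, h⟩ := hmin.2
    rw [← h]; simpa using hammingNorm_le_card_fintype (x := c)
  have hcard : ((univ : Finset (Fin n → F)).filter (fun c => c ∈ C ∧ vsupp c ⊆ S)).card
      = q ^ Module.finrank F K := by
    rw [← hq, ← Nat.card_eq_fintype_card, ← Module.natCard_eq_pow_finrank (K := F) (V := K),
      Nat.card_eq_fintype_card, Fintype.card_subtype]
    congr 1
    ext c
    simp only [mem_filter, mem_univ, true_and, hmem, vsupp, subset_iff]
    refine and_congr_right fun _ => forall_congr' fun i => ?_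
    tauto
  have hfin : Module.finrank F K = S.card + 1 - d := by
    apply le_antisymm
    · -- upper bound
      obtain ⟨T, hTS, hT⟩ := exists_subset_card_eq (s := S) (n := S.card + 1 - d)
        (by
          have := hmin.2
          obtain ⟨c, _, h0, h⟩ := this
          have : 0 < d := by rw [← h]; exact hammingNorm_pos_iff.2 h0
          omega)
      let f : K →ₗ[F] (T → F) := (LinearMap.funLeft F F (fun i : T => (i : Fin n))).comp K.subtype
      have hf : Function.Injective f := by
        rw [← LinearMap.ker_eq_bot, LinearMap.ker_eq_bot']
        rintro ⟨c, hc⟩ h0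
        have hc' := (hmem c).1 hc
        by_contra hne
        have hne : c ≠ 0 := fun h => hne (by ext; simp [h])
        have h1 := hmin.1 c hc'.1 hne
        have h2 : hammingNorm c ≤ (S \ T).card := by
          unfold hammingNorm
          apply card_le_card
          intro i hi
          simp only [mem_filter, mem_univ, true_and] at hi
          rw [mem_sdiff]
          refine ⟨by_contra fun h => hi (hc'.2 i h), fun hT => hi ?_⟩
          exact congrFun h0 ⟨i, hT⟩
        rw [card_sdiff_of_subset hTS] at h2
        have : T.card ≤ S.card := card_le_card hTS
        have : 0 < hammingNorm c := hammingNorm_pos_iff.2 hne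
        omega
      have := LinearMap.finrank_le_finrank_of_injective hf
      simpa [hT] using this
    · let f : C →ₗ[F] ((Sᶜ : Finset (Fin n)) → F) :=
        (LinearMap.funLeft F F (fun i : (Sᶜ : Finset (Fin n)) => (i : Fin n))).comp C.subtype
      have h1 := LinearMap.finrank_range_add_finrank_ker f
      have h2 : Module.finrank F (LinearMap.range f) ≤ n - S.card := by
        have := Submodule.finrank_le (LinearMap.range f)
        simpa [card_compl] using this
      have h3 : Module.finrank F (LinearMap.ker f) ≤ Module.finrank F K := by
        let g : LinearMap.ker f →ₗ[F] K := LinearMap.codRestrict K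
          (C.subtype.comp (LinearMap.ker f).subtype) (by
            rintro ⟨⟨c, hc⟩, h0⟩
            refine ⟨hc, fun i hi => ?_⟩
            exact congrFun (LinearMap.mem_ker.1 h0) ⟨i, by simpa using hi⟩)
        apply LinearMap.finrank_le_finrank_of_injective (f := g)
        intro a b hab
        have := congrArg Subtype.val hab
        exact Subtype.ext (Subtype.ext this)
      have : S.card ≤ n := by simpa using card_le_univ S
      omega
  rw [hcard, hfin, mdsB]; push_cast; rfl

open Classical in
lemma card_supp_eq (q k d : ℕ) (hq : Fintype.card F = q)
    (C : Submodule F (Fin n → F))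
    (hk : Module.finrank F C = k) (hmin : HasMinDist C d) (hMDS : d + k = n + 1)
    (S : Finset (Fin n)) :
    (((univ : Finset (Fin n → F)).filter (fun c => c ∈ C ∧ vsupp c = S)).card : ℤ)
      = mdsG q d S.card := by
  induction S using Finset.strongInduction with
  | H S ih =>
    have h1 := card_supp_subset q k d hq C hk hmin hMDS S
    have h2 : ((univ : Finset (Fin n → F)).filter (fun c => c ∈ C ∧ vsupp c ⊆ S)).card =
        ∑ T ∈ S.powerset, ((univ : Finset (Fin n → F)).filter (fun c => c ∈ C ∧ vsupp c = T)).card := by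
      rw [card_eq_sum_card_fiberwise (f := vsupp) (t := S.powerset)]
      · apply sum_congr rfl
        intro T hT
        congr 1
        ext c
        simp only [mem_filter, mem_univ, true_and]
        rw [mem_powerset] at hT
        constructor
        · rintro ⟨⟨a, b⟩, c⟩; exact ⟨a, c⟩
        · rintro ⟨a, rfl⟩; exact ⟨⟨a, hT⟩, rfl⟩
      · intro c hc
        simpa using (mem_filter.1 hc).2.2
    have h3 : ∑ T ∈ S.powerset, mdsG q d T.card = mdsB q d S.card := by
      rw [sum_powerset_apply_card, mdsG_sum]
    rw [h2, ← h3] at h1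
    push_cast at h1
    rw [← add_sum_erase _ _ (mem_powerset_self S), ← add_sum_erase _ (fun T => mdsG q d T.card) (mem_powerset_self S)] at h1
    rw [sum_congr rfl (fun T hT => ih T (by
      rw [mem_erase, mem_powerset] at hT
      exact hT.2.ssubset_of_ne hT.1))] at h1
    linarith

lemma numCodewords_eq (q k d : ℕ) (hq : Fintype.card F = q)
    (C : Submodule F (Fin n → F))
    (hk : Module.finrank F C = k) (hmin : HasMinDist C d) (hMDS : d + k = n + 1) (w : ℕ) :
    (numCodewordsOfWeight C w : ℤ) = (n.choose w : ℤ) * mdsG q d w := by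
  classical
  have h : numCodewordsOfWeight C w = 
      ((univ : Finset (Fin n → F)).filter (fun c => c ∈ C ∧ hammingNorm c = w)).card := by
    rw [numCodewordsOfWeight, ← Set.ncard_coe_finset]; simp
  rw [h, card_eq_sum_card_fiberwise (f := vsupp) (t := powersetCard w univ)]
  · push_cast
    rw [sum_congr rfl (g := fun _ => mdsG q d w)]
    · simp
    · intro T hT
      rw [mem_powersetCard] at hT
      rw [← hT.2, ← card_supp_eq q k d hq C hk hmin hMDS T, hT.2]
      congr 2
      ext c
      simp only [mem_filter, mem_univ, true_and]
      constructor
      · rintro ⟨⟨a, b⟩, c⟩; exact ⟨a, c⟩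
      · rintro ⟨a, rfl⟩; exact ⟨⟨a, hT.2⟩, rfl⟩
  · intro c hc
    have := (mem_filter.1 hc).2.2
    exact mem_coe.2 (mem_powersetCard.2 ⟨subset_univ _, this⟩)
end

section
variable {F : Type*} [Field F] [Fintype F] [DecidableEq F] {n : ℕ}

lemma norm_add_single (c : Fin n → F) (a : Fin n) (α : F) :
    (hammingNorm (c + Pi.single a α) : ℤ) = hammingNorm c
      + (if c a + α = 0 then 0 else 1) - (if c a = 0 then 0 else 1) := by
  have key : ∀ x : Fin n → F, (hammingNorm x : ℤ) = ∑ i, (if x i = 0 then (0 : ℤ) else 1) := by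
    intro x
    rw [hammingNorm, card_filter]; push_cast
    apply sum_congr rfl; intro i _; by_cases h : x i = 0 <;> simp [h]
  rw [key, key, ← add_sum_erase _ _ (mem_univ a), ← add_sum_erase _ (fun i => if c i = 0 then (0 : ℤ) else 1) (mem_univ a)]
  rw [sum_congr rfl (g := fun i => if c i = 0 then (0 : ℤ) else 1)]
  · simp
    ring
  · intro i hi
    simp [Pi.single_eq_of_ne (mem_erase.1 hi).1]

lemma sum_ne_zero_ite (q : ℕ) (hq : Fintype.card F = q) (u : F) (G : ℤ → ℤ) :
    ∑ α ∈ (univ : Finset F).erase 0, G (if u + α = 0 then 0 else 1) =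
      if u = 0 then ((q : ℤ) - 1) * G 1 else G 0 + ((q : ℤ) - 2) * G 1 := by
  have hc : (((univ : Finset F).erase 0).card : ℤ) = q - 1 := by
    rw [card_erase_of_mem (mem_univ _), card_univ, hq, Nat.cast_sub]
    · simp
    · rw [← hq]; exact Fintype.card_pos
  split_ifs with h
  · subst h
    rw [sum_congr rfl (g := fun _ => G 1)]
    · rw [sum_const, nsmul_eq_mul, hc]
    · intro α hα
      simp [(mem_erase.1 hα).1]
  · have hm : -u ∈ (univ : Finset F).erase 0 := by simp [h]
    rw [← add_sum_erase _ _ hm, sum_congr rfl (g := fun _ => G 1)]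
    · rw [sum_const, nsmul_eq_mul, card_erase_of_mem hm, Nat.cast_sub (card_pos.2 ⟨_, hm⟩), hc]
      simp
      left; ring
    · intro α hα
      have : u + α ≠ 0 := fun h' => (mem_erase.1 hα).1 (by linear_combination h')
      simp [this]

lemma sum_offDiag_ite (P : Fin n → Prop) [DecidablePred P] (j : ℕ) (hj : (univ.filter (fun i => ¬ P i)).card = j)
    (x y z t : ℤ) :
    ∑ ab ∈ (univ : Finset (Fin n)).offDiag,
      (if P ab.1 then (if P ab.2 then x else y) else (if P ab.2 then z else t)) =
    ((n : ℤ) - j) * ((n : ℤ) - j - 1) * x + ((n : ℤ) - j) * j * (y + z) + j * ((j : ℤ) - 1) * t := by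
  have hm : ((univ.filter (fun i => P i)).card : ℤ) = (n : ℤ) - j := by
    have := card_filter_add_card_filter_not (s := (univ : Finset (Fin n))) P
    rw [hj] at this
    simp at this
    change ((filter P univ).card : ℤ) = _
    omega
  have h1 : ∑ ab ∈ (univ : Finset (Fin n)).offDiag,
      (if P ab.1 then (if P ab.2 then x else y) else (if P ab.2 then z else t))
      + ∑ a : Fin n, (if P a then x else t) = ∑ a : Fin n, ∑ b : Fin n,
      (if P a then (if P b then x else y) else (if P b then z else t)) := by
    rw [← sum_product', ← diag_union_offDiag, sum_union (disjoint_diag_offDiag _), add_comm]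
    congr 1
    rw [sum_diag]
    apply sum_congr rfl; intro a _; by_cases h : P a <;> simp [h]
  have h2 : ∀ u v : ℤ, ∑ a : Fin n, (if P a then u else v) = ((n : ℤ) - j) * u + j * v := by
    intro u v
    rw [sum_ite, sum_const, sum_const, nsmul_eq_mul, nsmul_eq_mul, hm, hj]
  have h3 : ∀ a, ∑ b : Fin n,
      (if P a then (if P b then x else y) else (if P b then z else t)) =
      if P a then ((n : ℤ) - j) * x + j * y else ((n : ℤ) - j) * z + j * t := by
    intro a
    by_cases h : P a <;> simp only [h, if_true, if_false, h2]
  rw [sum_congr rfl (fun a _ => h3 a), h2, h2] at h1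
  linear_combination h1

/-- Twice the number of weight two vectors taking a weight `j` vector to weight `w`. -/
def kern (q n : ℕ) (w j : ℤ) : ℤ :=
  ((n : ℤ) - j) * ((n : ℤ) - j - 1) * (((q : ℤ) - 1) ^ 2 * (if j = w - 2 then 1 else 0))
  + 2 * (((n : ℤ) - j) * j) * (((q : ℤ) - 1) *
      ((if j = w then 1 else 0) + ((q : ℤ) - 2) * (if j = w - 1 then 1 else 0)))
  + j * (j - 1) * ((if j = w + 2 then 1 else 0) + 2 * ((q : ℤ) - 2) * (if j = w + 1 then 1 else 0)
      + ((q : ℤ) - 2) ^ 2 * (if j = w then 1 else 0))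

lemma count_pairs (q : ℕ) (hq : Fintype.card F = q) (c : Fin n → F) (w : ℕ) :
    ∑ ab ∈ (univ : Finset (Fin n)).offDiag, ∑ α ∈ (univ : Finset F).erase 0,
      ∑ β ∈ (univ : Finset F).erase 0,
        (if hammingNorm (c + (Pi.single ab.1 α + Pi.single ab.2 β)) = w then (1 : ℤ) else 0) =
    kern q n w (hammingNorm c) := by
  have hz := sum_offDiag_ite (fun i => c i = 0) (hammingNorm c) rfl
  obtain ⟨j, hj⟩ : ∃ j : ℤ, j = (hammingNorm c : ℤ) := ⟨_, rfl⟩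
  rw [← hj] at hz ⊢
  have h : ∀ ab ∈ (univ : Finset (Fin n)).offDiag, ∑ α ∈ (univ : Finset F).erase 0,
      ∑ β ∈ (univ : Finset F).erase 0,
        (if hammingNorm (c + (Pi.single ab.1 α + Pi.single ab.2 β)) = w then (1 : ℤ) else 0) =
      (if c ab.1 = 0 then
        (if c ab.2 = 0 then ((q : ℤ) - 1) ^ 2 * (if j = w - 2 then 1 else 0)
          else ((q : ℤ) - 1) * ((if j = w then 1 else 0) + ((q : ℤ) - 2) * (if j = w - 1 then 1 else 0)))
      else
        (if c ab.2 = 0 then ((q : ℤ) - 1) * ((if j = w then 1 else 0) + ((q : ℤ) - 2) * (if j = w - 1 then 1 else 0))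
          else (if j = w + 2 then 1 else 0) + 2 * ((q : ℤ) - 2) * (if j = w + 1 then 1 else 0)
      + ((q : ℤ) - 2) ^ 2 * (if j = w then 1 else 0))) := by
    rintro ⟨a, b⟩ hab
    have hab : a ≠ b := by simpa using hab
    have e1 : ∀ α β : F, (if hammingNorm (c + (Pi.single a α + Pi.single b β)) = w then (1 : ℤ) else 0)
       = if j + (if c a + α = 0 then 0 else 1) - (if c a = 0 then 0 else 1)
          + (if c b + β = 0 then 0 else 1) - (if c b = 0 then 0 else 1) = w then 1 else 0 := by
      intro α β
      have := norm_add_single (c + Pi.single a α) b β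
      rw [norm_add_single c a α, add_assoc c] at this
      simp only [Pi.add_apply, Pi.single_eq_of_ne hab.symm, add_zero] at this
      rw [← hj] at this
      rw [← this]
      norm_cast
    simp only [e1]
    have e2 : ∀ α : F, ∑ β ∈ (univ : Finset F).erase 0, 
        (if j + (if c a + α = 0 then 0 else 1) - (if c a = 0 then 0 else 1)
          + (if c b + β = 0 then 0 else 1) - (if c b = 0 then 0 else 1) = (w : ℤ) then (1 : ℤ) else 0) = _ := 
      fun α => sum_ne_zero_ite q hq (c b) (fun t => if j + (if c a + α = 0 then 0 else 1) - (if c a = 0 then 0 else 1)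
          + t - (if c b = 0 then 0 else 1) = (w : ℤ) then (1 : ℤ) else 0)
    simp only [e2]
    have e3 := sum_ne_zero_ite q hq (c a) (fun s => 
      if c b = 0 then ((q : ℤ) - 1) * (if j + s - (if c a = 0 then 0 else 1)
          + 1 - (if c b = 0 then 0 else 1) = (w : ℤ) then (1 : ℤ) else 0)
      else (if j + s - (if c a = 0 then 0 else 1)
          + 0 - (if c b = 0 then 0 else 1) = (w : ℤ) then (1 : ℤ) else 0) + 
          ((q : ℤ) - 2) * (if j + s - (if c a = 0 then 0 else 1)
          + 1 - (if c b = 0 then 0 else 1) = (w : ℤ) then (1 : ℤ) else 0))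
    rw [e3]
    have E : ∀ {A B : Prop} [Decidable A] [Decidable B], (A ↔ B) →
      (if A then (1 : ℤ) else 0) = if B then 1 else 0 := by
      intro A B _ _ h; simp only [h]
    by_cases ha : c a = 0 <;> by_cases hb : c b = 0 <;> simp only [ha, hb, if_true, if_false]
    · rw [E (show j + 1 - 0 + 1 - 0 = (w : ℤ) ↔ j = w - 2 by omega)]; ring
    · rw [E (show j + 1 - 0 + 0 - 1 = (w : ℤ) ↔ j = w by omega),
        E (show j + 1 - 0 + 1 - 1 = (w : ℤ) ↔ j = w - 1 by omega)]
    · rw [E (show j + 0 - 1 + 1 - 0 = (w : ℤ) ↔ j = w by omega),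
        E (show j + 1 - 1 + 1 - 0 = (w : ℤ) ↔ j = w - 1 by omega)]; ring
    · rw [E (show j + 0 - 1 + 0 - 1 = (w : ℤ) ↔ j = w + 2 by omega),
        E (show j + 0 - 1 + 1 - 1 = (w : ℤ) ↔ j = w + 1 by omega),
        E (show j + 1 - 1 + 0 - 1 = (w : ℤ) ↔ j = w + 1 by omega),
        E (show j + 1 - 1 + 1 - 1 = (w : ℤ) ↔ j = w by omega)]; ring
  rw [sum_congr rfl h, hz, kern]
  ring

lemma count_pairs' (Q : (Fin n → F) → Prop) [DecidablePred Q] :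
    2 * (((univ : Finset (Fin n → F)).filter (fun e => hammingNorm e = 2 ∧ Q e)).card : ℤ) =
    ∑ ab ∈ (univ : Finset (Fin n)).offDiag, ∑ α ∈ (univ : Finset F).erase 0,
      ∑ β ∈ (univ : Finset F).erase 0,
        (if Q (Pi.single ab.1 α + Pi.single ab.2 β) then (1 : ℤ) else 0) := by
  classical
  have h1 : ∀ ab ∈ (univ : Finset (Fin n)).offDiag, ∑ α ∈ (univ : Finset F).erase 0,
      ∑ β ∈ (univ : Finset F).erase 0,
        (if Q (Pi.single ab.1 α + Pi.single ab.2 β) then (1 : ℤ) else 0) =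
      ∑ e ∈ (univ : Finset (Fin n → F)).filter (fun e => hammingNorm e = 2 ∧ Q e),
        if ab ∈ (vsupp e).offDiag then (1 : ℤ) else 0 := by
    rintro ⟨a, b⟩ hab
    have hab : a ≠ b := by simpa using hab
    rw [← sum_product', ← sum_filter, ← sum_filter, sum_const, sum_const]
    congr 1
    apply card_bij (fun (p : F × F) _ => (Pi.single a p.1 + Pi.single b p.2 : Fin n → F))
    · rintro ⟨α, β⟩ hp
      simp only [mem_filter, mem_product, mem_erase, mem_univ, and_true] at hp
      obtain ⟨⟨hα, hβ⟩, hQ⟩ := hp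
      have hs : vsupp (Pi.single a α + Pi.single b β : Fin n → F) = {a, b} := by
        ext i
        simp only [vsupp, mem_filter, mem_univ, true_and, mem_insert, mem_singleton, Pi.add_apply]
        by_cases hia : i = a
        · subst hia; simp [hab, hα]
        · by_cases hib : i = b
          · subst hib; simp [hia, hβ]
          · simp [hia, hib]
      simp only [mem_filter, mem_univ, true_and]
      refine ⟨⟨?_, hQ⟩, ?_⟩
      · change (vsupp _).card = 2
        rw [hs, card_pair hab]
      · rw [hs]; simp [hab]
    · rintro ⟨α, β⟩ _ ⟨α', β'⟩ _ h
      have h1 := congrFun h a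
      have h2 := congrFun h b
      simp [hab, hab.symm] at h1 h2
      simp [h1, h2]
    · intro e he
      simp only [mem_filter, mem_univ, true_and, mem_offDiag] at he
      obtain ⟨⟨h2, hQ⟩, ha, hb, _⟩ := he
      have hs : ({a, b} : Finset (Fin n)) = vsupp e := by
        apply eq_of_subset_of_card_le
        · intro i hi
          simp only [mem_insert, mem_singleton] at hi
          rcases hi with rfl | rfl <;> assumption
        · rw [card_pair hab]; exact h2.le
      have he : Pi.single a (e a) + Pi.single b (e b) = e := by
        ext i
        rw [Pi.add_apply]
        by_cases hia : i = a
        · subst hia; simp [hab]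
        · by_cases hib : i = b
          · subst hib; simp [hia]
          · have : i ∉ vsupp e := by rw [← hs]; simp [hia, hib]
            have : e i = 0 := by simpa [vsupp] using this
            simp [hia, hib, this]
      refine ⟨(e a, e b), ?_, he⟩
      simp only [mem_filter, mem_product, mem_erase, mem_univ, and_true]
      refine ⟨⟨?_, ?_⟩, by rw [he]; exact hQ⟩
      · simpa [vsupp] using ha
      · simpa [vsupp] using hb
  rw [sum_congr rfl h1, sum_comm]
  rw [sum_congr rfl (g := fun _ => (2 : ℤ))]
  · simp [mul_comm]
  · intro e he
    rw [← sum_filter, sum_const]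
    have h2 : (vsupp e).card = 2 := (mem_filter.1 he).2.1
    have : (univ : Finset (Fin n)).offDiag.filter (fun ab => ab ∈ (vsupp e).offDiag) = (vsupp e).offDiag := by
      ext ⟨a, b⟩; simp
    rw [this, offDiag_card, h2]; simp

open Classical in
lemma exact_two (C : Submodule F (Fin n → F)) (d w : ℕ) (hmin : HasMinDist C d) (hd : 5 ≤ d) :
    numVectorsCosetExact C w 2 = ∑ c ∈ (univ : Finset (Fin n → F)).filter (fun c => c ∈ C),
      ((univ : Finset (Fin n → F)).filter (fun e => hammingNorm e = 2 ∧ hammingNorm (c + e) = w)).card := by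
  have huniq : ∀ c ∈ C, ∀ c' ∈ C, ∀ e e' : Fin n → F, hammingNorm e ≤ 2 → hammingNorm e' ≤ 2 →
      c + e = c' + e' → c = c' := by
    intro c hc c' hc' e e' he he' h
    by_contra hne
    have h1 := hmin.1 (c - c') (C.sub_mem hc hc') (sub_ne_zero.2 hne)
    have h2 : c - c' = -e + e' := by linear_combination (exp := 1) h
    rw [h2, ← hammingDist_eq_hammingNorm] at h1
    have := hammingDist_triangle e 0 e'
    rw [hammingDist_zero_right, hammingDist_zero_left] at this
    omega
  have hcw : ∀ x, cosetWeight C x = 2 ↔ ∃ c ∈ C, ∃ e, hammingNorm e = 2 ∧ c + e = x := by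
    intro x
    have hne : {m : ℕ | ∃ c ∈ C, hammingNorm (x - c) = m}.Nonempty := ⟨_, 0, C.zero_mem, rfl⟩
    constructor
    · intro h
      have := Nat.sInf_mem hne
      rw [show sInf {m : ℕ | ∃ c ∈ C, hammingNorm (x - c) = m} = 2 from h] at this
      obtain ⟨c, hc, h⟩ := this
      exact ⟨c, hc, x - c, h, by simp⟩
    · rintro ⟨c, hc, e, he, rfl⟩
      apply le_antisymm
      · exact Nat.sInf_le ⟨c, hc, by simpa using he⟩
      · apply le_csInf hne
        rintro m ⟨c', hc', rfl⟩
        by_contra hlt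
        have := huniq c hc c' hc' e (c + e - c') he.le (by omega) (by ring)
        subst this
        simp [he] at hlt
  rw [numVectorsCosetExact, ← card_sigma]
  rw [show {x : Fin n → F | hammingNorm x = w ∧ cosetWeight C x = 2} =
    (((univ : Finset (Fin n → F)).filter (fun x => hammingNorm x = w ∧ cosetWeight C x = 2) : Finset _) : Set _) by simp,
    Set.ncard_coe_finset]
  symm
  apply card_bij (fun (p : Σ _ : Fin n → F, Fin n → F) _ => p.1 + p.2)
  · rintro ⟨c, e⟩ hp
    simp only [mem_sigma, mem_filter, mem_univ, true_and] at hp ⊢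
    exact ⟨hp.2.2, (hcw _).2 ⟨c, hp.1, e, hp.2.1, rfl⟩⟩
  · rintro ⟨c, e⟩ hp ⟨c', e'⟩ hp' h
    simp only [mem_sigma, mem_filter, mem_univ, true_and] at hp hp' h
    have := huniq c hp.1 c' hp'.1 e e' hp.2.1.le hp'.2.1.le h
    subst this
    have := add_left_cancel h
    subst this
    rfl
  · intro x hx
    simp only [mem_filter, mem_univ, true_and] at hx
    obtain ⟨c, hc, e, he, rfl⟩ := (hcw x).1 hx.2
    refine ⟨⟨c, e⟩, ?_, rfl⟩
    simp only [mem_sigma, mem_filter, mem_univ, true_and]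
    exact ⟨hc, he, hx.1⟩

lemma sum_ind (C : Submodule F (Fin n → F)) [DecidablePred (fun c => c ∈ C)] (v : ℕ) (f : ℤ → ℤ) :
    ∑ c ∈ (univ : Finset (Fin n → F)).filter (fun c => c ∈ C), 
      f (hammingNorm c) * (if (hammingNorm c : ℤ) = v then 1 else 0) =
      f v * numCodewordsOfWeight C v := by
  have h : numCodewordsOfWeight C v = 
      ((univ : Finset (Fin n → F)).filter (fun c => c ∈ C ∧ hammingNorm c = v)).card := by
    rw [numCodewordsOfWeight, ← Set.ncard_coe_finset]; simp
  rw [h, ← filter_filter, card_filter]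
  push_cast
  rw [mul_sum]
  apply sum_congr rfl
  intro c _
  by_cases h : hammingNorm c = v
  · simp [h]
  · simp [h]

lemma two_mul_exact (q : ℕ) (hq : Fintype.card F = q) 
    (C : Submodule F (Fin n → F)) (d u : ℕ) (hmin : HasMinDist C d) (hd : 5 ≤ d) :
    2 * (numVectorsCosetExact C (u + 2) 2 : ℤ) =
      ((n : ℤ) - u) * ((n : ℤ) - u - 1) * ((q : ℤ) - 1) ^ 2 * numCodewordsOfWeight C u
      + 2 * (((n : ℤ) - (u + 1)) * (u + 1)) * ((q : ℤ) - 1) * ((q : ℤ) - 2) *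
          numCodewordsOfWeight C (u + 1)
      + (2 * (((n : ℤ) - (u + 2)) * (u + 2)) * ((q : ℤ) - 1) + (u + 2) * (u + 1) * ((q : ℤ) - 2) ^ 2) *
          numCodewordsOfWeight C (u + 2)
      + 2 * (u + 3) * (u + 2) * ((q : ℤ) - 2) * numCodewordsOfWeight C (u + 3)
      + (u + 4) * (u + 3) * numCodewordsOfWeight C (u + 4) := by
  classical
  rw [exact_two C d (u + 2) hmin hd]
  push_cast
  rw [mul_sum]
  simp only [count_pairs', count_pairs q hq]
  rw [show ((u + 2 : ℕ) : ℤ) = u + 2 by push_cast; rfl]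
  have s0 := sum_ind C u (fun j => ((n : ℤ) - j) * ((n : ℤ) - j - 1) * ((q : ℤ) - 1) ^ 2)
  have s1 := sum_ind C (u + 1) (fun j => 2 * (((n : ℤ) - j) * j) * ((q : ℤ) - 1) * ((q : ℤ) - 2))
  have s2 := sum_ind C (u + 2) (fun j => 2 * (((n : ℤ) - j) * j) * ((q : ℤ) - 1) + 
    j * (j - 1) * ((q : ℤ) - 2) ^ 2)
  have s3 := sum_ind C (u + 3) (fun j => 2 * j * (j - 1) * ((q : ℤ) - 2))
  have s4 := sum_ind C (u + 4) (fun j => j * (j - 1))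
  push_cast at s0 s1 s2 s3 s4
  simp only [kern]
  rw [show (u : ℤ) + 2 - 2 = u by ring, show (u : ℤ) + 2 - 1 = u + 1 by ring,
      show (u : ℤ) + 2 + 2 = u + 4 by ring, show (u : ℤ) + 2 + 1 = u + 3 by ring]
  have := congrArg₂ (· + ·) (congrArg₂ (· + ·) (congrArg₂ (· + ·) (congrArg₂ (· + ·) s0 s1) s2) s3) s4
  simp only [← sum_add_distrib] at this
  refine Eq.trans (sum_congr rfl fun c _ => ?_) (this.trans ?_)
  · ring
  · ring
end

lemma choose_lower (n v : ℕ) :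
    ((v : ℤ) + 1) * (n.choose (v + 1) : ℤ) = ((n : ℤ) - v) * (n.choose v : ℤ) := by
  rcases Nat.lt_or_ge n v with h | h
  · rw [Nat.choose_eq_zero_of_lt h, Nat.choose_eq_zero_of_lt (by omega)]; simp
  · have := Nat.choose_succ_right_eq n v
    have h' := congrArg (Nat.cast : ℕ → ℤ) this
    push_cast [Nat.cast_sub h] at h'
    linear_combination h'

lemma choose_upper (v m : ℕ) :
    ((v : ℤ) + 1) * (v.choose m : ℤ) = ((v : ℤ) + 1 - m) * ((v + 1).choose m : ℤ) := by
  rcases Nat.lt_or_ge (v + 1) m with h | h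
  · rw [Nat.choose_eq_zero_of_lt h, Nat.choose_eq_zero_of_lt (by omega)]; simp
  · have := Nat.choose_mul_succ_eq v m
    have h' := congrArg (Nat.cast : ℕ → ℤ) this
    push_cast [Nat.cast_sub h] at h'
    linear_combination h'

/-- **Integral weight spectrum of the weight-2 cosets of an MDS code** (Theorem 5.3(i),
eq. (5.9)).  For an `[n,k,d]_q` MDS code with `d ≥ 5` and `d-2 ≤ w ≤ n`,
`A_w^Σ(V^{(2)}) = C(n,2)(q-1)²[ A_w(C)
  - (-1)^{w-d}( C(n,w)C(w-1,d-2) - C(n-2,w-2)C(w-3,d-4) ) ]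
  + (-1)^{w-d} C(n,2)(q-1) C(n-d+2,n-w) C(n-2,d-2)`. -/
theorem numVectorsCosetExact_two_eq' {F : Type*} [Field F] [Fintype F] [DecidableEq F]
    (q n k d w : ℕ) (hq : Fintype.card F = q)
    (C : Submodule F (Fin n → F))
    (hk : Module.finrank F C = k) (hmin : HasMinDist C d) (hMDS : d + k = n + 1)
    (hd : 5 ≤ d) (hw1 : d - 2 ≤ w) (hwn : w ≤ n) :
    (numVectorsCosetExact C w 2 : ℤ) =
      (n.choose 2 : ℤ) * ((q : ℤ) - 1) ^ 2 *
        ((numCodewordsOfWeight C w : ℤ)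
          - (-1 : ℤ) ^ (w + d) *
            ((n.choose w : ℤ) * ((w - 1).choose (d - 2) : ℤ)
              - ((n - 2).choose (w - 2) : ℤ) * ((w - 3).choose (d - 4) : ℤ)))
      + (-1 : ℤ) ^ (w + d) * (n.choose 2 : ℤ) * ((q : ℤ) - 1) *
          ((n - d + 2).choose (n - w) : ℤ) * ((n - 2).choose (d - 2) : ℤ) := by
  obtain ⟨u, rfl⟩ : ∃ u, w = u + 1 + 2 := ⟨w - 3, by omega⟩
  obtain ⟨m, rfl⟩ : ∃ m, d = m + 2 + 2 := ⟨d - 4, by omega⟩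
  have hdn : m + 2 + 2 ≤ n := by
    obtain ⟨c, _, _, h⟩ := hmin.2
    rw [← h]; simpa using hammingNorm_le_card_fintype (x := c)
  obtain ⟨r, rfl⟩ : ∃ r, n = r + 1 + 1 := ⟨n - 2, by omega⟩
  have hA := two_mul_exact q hq C (m + 2 + 2) (u + 1) hmin hd
  simp only [numCodewords_eq q k (m + 2 + 2) hq C hk hmin hMDS] at hA ⊢
  have g1 := mdsG_succ q (m + 2 + 2) (u + 1) (by omega) (by omega)
  have g2 := mdsG_succ q (m + 2 + 2) (u + 2) (by omega) (by omega)
  have g3 := mdsG_succ q (m + 2 + 2) (u + 3) (by omega) (by omega)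
  have g4 := mdsG_succ q (m + 2 + 2) (u + 4) (by omega) (by omega)
  have t0 := choose_lower (r + 1 + 1) (u + 1)
  have t1 := choose_lower (r + 1 + 1) (u + 2)
  have t3 := choose_lower (r + 1 + 1) (u + 3)
  have t4 := choose_lower (r + 1 + 1) (u + 4)
  have n2 : 2 * ((r + 1 + 1).choose 2 : ℤ) = (r + 2) * (r + 1) := by
    have := choose_lower (r + 1 + 1) 1
    push_cast at this
    simp only [Nat.choose_one_right] at this
    push_cast at this
    linear_combination this
  have hD : ((r : ℤ) + 2) * (r + 1) * (r.choose (u + 1) : ℤ)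
      = (u + 3) * (u + 2) * ((r + 1 + 1).choose (u + 3) : ℤ) := by
    have e1 := Nat.add_one_mul_choose_eq r (u + 1)
    have e2 := Nat.add_one_mul_choose_eq (r + 1) (u + 2)
    have e1 := congrArg (Nat.cast : ℕ → ℤ) e1
    have e2 := congrArg (Nat.cast : ℕ → ℤ) e2
    push_cast at e1 e2
    linear_combination ((r : ℤ) + 2) * e1 + ((u : ℤ) + 2) * e2
  have hY : ((r : ℤ) + 2) * (r + 1) * (((r - m).choose (r + 1 + 1 - (u + 1 + 2)) : ℤ) * (r.choose (m + 2) : ℤ))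
      = ((r : ℤ) - m) * (r - m - 1) * (((r + 1 + 1).choose (u + 3) : ℤ) * ((u + 3).choose (m + 2) : ℤ)) := by
    have e1 := choose_upper r (m + 2)
    have e2 := choose_upper (r + 1) (m + 2)
    have e3 := Nat.choose_mul (n := r + 1 + 1) (k := u + 3) (s := m + 2) (by omega) 
    rw [show r + 1 + 1 - (m + 2) = r - m by omega, 
      ← Nat.choose_symm (n := r - m) (k := u + 3 - (m + 2)) (by omega), 
      show r - m - (u + 3 - (m + 2)) = r + 1 + 1 - (u + 1 + 2) by omega] at e3
    generalize (r - m).choose (r + 1 + 1 - (u + 1 + 2)) = Y at *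
    have e3 := congrArg (Nat.cast : ℕ → ℤ) e3
    push_cast at e1 e2 e3
    linear_combination ((r : ℤ) + 2) * Y * e1 + Y * ((r : ℤ) - m - 1) * e2 - ((r : ℤ) - m) * (r - m - 1) * e3
  have b2 := choose_upper (u + 1) (m + 2)
  have b3 := choose_upper (u + 2) (m + 2)
  have p1 : ((u + 2).choose (m + 2) : ℤ) - 2 * ((u + 1).choose (m + 2) : ℤ) + (u.choose (m + 2) : ℤ)
      = (u.choose m : ℤ) := by
    rw [Nat.choose_succ_succ' (u + 1) (m + 1), Nat.choose_succ_succ' u (m + 1), Nat.choose_succ_succ' u m]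
    push_cast; ring
  have hε : (-1 : ℤ) ^ (u + 1 + 2 + (m + 2 + 2)) = (-1) ^ (u + 1 + (m + 2 + 2)) := by ring
  rw [show u + 2 + (m + 2 + 2) = u + 1 + (m + 2 + 2) + 1 by ring, pow_succ] at g2
  rw [show u + 3 + (m + 2 + 2) = u + 1 + (m + 2 + 2) + 2 by ring, pow_add] at g3
  rw [show u + 4 + (m + 2 + 2) = u + 1 + (m + 2 + 2) + 3 by ring, pow_add] at g4
  rw [hε]
  rw [show r + 1 + 1 - (m + 2 + 2) + 2 = r - m by omega]
  simp only [show r + 1 + 1 - 2 = r by omega, show u + 1 + 2 - 1 = u + 2 by omega, show u + 1 + 2 - 2 = u + 1 by omega,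
    show u + 1 + 2 - 3 = u by omega, show m + 2 + 2 - 4 = m by omega, show m + 2 + 2 - 2 = m + 2 by omega,
    show u + 1 + 1 = u + 2 by omega, show u + 1 + 2 = u + 3 by omega, show u + 1 + 3 = u + 4 by omega, 
    show u + 1 + 4 = u + 5 by omega, show u + 2 + 1 = u + 3 by omega, show u + 3 + 1 = u + 4 by omega, show u + 4 + 1 = u + 5 by omega, 
    show u + 1 - 1 = u by omega, show u + 2 - 1 = u + 1 by omega, show u + 3 - 1 = u + 2 by omega,
    show u + 4 - 1 = u + 3 by omega] at *
  rw [g4, g3, g2, g1] at hA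
  rw [g2, g1]
  generalize (-1 : ℤ) ^ (u + 1 + (m + 2 + 2)) = ε at *
  generalize mdsG q (m + 2 + 2) (u + 1) = G0 at *
  generalize (((r - m).choose (r + 1 + 1 - (u + 3)) : ℕ) : ℤ) = Y at *
  push_cast at *
  generalize (((r + 1 + 1).choose (u + 1) : ℕ) : ℤ) = X0 at *
  generalize (((r + 1 + 1).choose (u + 2) : ℕ) : ℤ) = X1 at *
  generalize (((r + 1 + 1).choose (u + 3) : ℕ) : ℤ) = X at *
  generalize (((r + 1 + 1).choose (u + 4) : ℕ) : ℤ) = X3 at *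
  generalize (((r + 1 + 1).choose (u + 5) : ℕ) : ℤ) = X4 at *
  generalize (((r + 1 + 1).choose 2 : ℕ) : ℤ) = N2 at *
  generalize (((u).choose (m + 2) : ℕ) : ℤ) = B1 at *
  generalize (((u + 1).choose (m + 2) : ℕ) : ℤ) = B2 at *
  generalize (((u + 2).choose (m + 2) : ℕ) : ℤ) = B3 at *
  generalize (((u + 3).choose (m + 2) : ℕ) : ℤ) = B4 at *
  generalize (((u).choose m : ℕ) : ℤ) = c at *
  generalize ((r.choose (u + 1) : ℕ) : ℤ) = D at *
  generalize ((r.choose (m + 2) : ℕ) : ℤ) = Z at *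
  generalize (numVectorsCosetExact C (u + 3) 2 : ℤ) = V at *
  clear g1 g2 g3 g4 hε hmin hMDS hk hq
  generalize (q : ℤ) = Q at *
  generalize (u : ℤ) = U at *
  generalize (r : ℤ) = R at *
  generalize (m : ℤ) = M at *
  have T0 : (R + 1 - U) * (R - U) * X0 = (U + 3) * (U + 2) * X := by
    linear_combination (-(R - U)) * t0 - (U + 2) * t1
  have T4 : (U + 5) * (U + 4) * X4 = (R - 1 - U) * (R - 2 - U) * X := by
    linear_combination (U + 4) * t4 + (R - 2 - U) * t3
  obtain ⟨p, rfl⟩ : ∃ p, Q = p + 1 := ⟨Q - 1, by ring⟩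
  have BB : (U + 3) * (U + 2) * B2 = (U + 1 - M) * (U - M) * B4 := by
    linear_combination (U + 3) * b2 + (U - M) * b3
  suffices h : 2 * V = (R + 2) * (R + 1) * p ^ 2 * (X * (p * (p * (G0 - ε * B1) + ε * B2)) - ε * (X * B3 - D * c)) +
      ε * ((R + 2) * (R + 1)) * p * Y * Z by
    have : (2 : ℤ) ≠ 0 := by norm_num
    apply mul_left_cancel₀ this
    rw [h, ← n2]; ring
  rw [hA]
  linear_combination p ^ 2 * G0 * T0 - 2 * (U + 2) * p * (p - 1) * (p * (G0 - ε * B1)) * t1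
    + 2 * (U + 3) * (p - 1) * (p * (p * (p * (G0 - ε * B1) + ε * B2) - ε * B3)) * t3
    + (p * (p * (p * (p * (G0 - ε * B1) + ε * B2) - ε * B3) + ε * B4)) * T4
    - p ^ 2 * ε * c * hD - ε * p * hY + (U + 3) * (U + 2) * X * p ^ 2 * ε * p1
    + p * ε * X * BB + 2 * (R - 1 - U) * p * ε * X * b3
end

section
/- Let C be a [q+1, q-3, 5]_q MDS code of length n = q+1 and minimum distance d = 5, and let w be a natural number with 3 ≤ w ≤ q+1. Then the overall number A_w^Σ(V^{(2)}) of Hamming-weight-w vectors lying in cosets of C of weight exactly 2 satisfies, as an identity of rational numbers, A_w^Σ(V^{(2)}) = C(q+1, 2) (q-1)^2 · [ A_w(C) - ε · ( C(q+1, w) C(w-1, 3) - C(q-1, w-2) C(w-3, 1) ) + ε · (1/3) · C(q-2, w-3) C(q-2, 2) ], where ε = (-1)^{w-5}. -/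
open Finset

section MDSAux
variable {F : Type*} [Field F] [Fintype F] [DecidableEq F]

lemma aux_small {n : ℕ} (C : Submodule F (Fin n → F)) (hmin : ∀ c ∈ C, c ≠ 0 → 5 ≤ hammingNorm c)
    (R : Finset (Fin n)) (hR : R.card ≤ 4) (c : Fin n → F) (hc : c ∈ C)
    (h : ∀ i, i ∉ R → c i = 0) : c = 0 := by
  by_contra hne
  have h5 := hmin c hc hne
  have : hammingNorm c ≤ R.card := by
    unfold hammingNorm
    apply Finset.card_le_card
    intro i hi
    by_contra hiR
    simp at hi
    exact hi (h i hiR)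
  omega

lemma aux_supp_count {n : ℕ} (C : Submodule F (Fin n → F))
    (hmin : ∀ c ∈ C, c ≠ 0 → 5 ≤ hammingNorm c) (hk : Module.finrank F C + 4 = n)
    (S : Finset (Fin n)) :
    Nat.card {c : C // ∀ i, i ∉ S → c.1 i = 0} = (Fintype.card F) ^ (S.card - 4) := by
  by_cases hS : S.card ≤ 4
  · have : S.card - 4 = 0 := by omega
    rw [this, pow_zero, Nat.card_eq_one_iff_unique]
    refine ⟨⟨fun a b => ?_⟩, ⟨⟨0, by simp⟩⟩⟩
    have ha := aux_small C hmin S hS a.1.1 a.1.2 a.2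
    have hb := aux_small C hmin S hS b.1.1 b.1.2 b.2
    exact Subtype.ext (Subtype.ext (ha.trans hb.symm))
  · obtain ⟨R, hRS, hR⟩ := Finset.exists_subset_card_eq (show 4 ≤ S.card by omega)
    let φ : C →ₗ[F] ({i // i ∉ R} → F) :=
      { toFun := fun c i => c.1 i.1
        map_add' := fun a b => rfl
        map_smul' := fun a b => rfl }
    have hinj : Function.Injective φ := by
      rw [injective_iff_map_eq_zero]
      intro c hc
      apply Subtype.ext
      apply aux_small C hmin R hR.le c.1 c.2
      intro i hi
      exact congrFun hc ⟨i, hi⟩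
    have hfr : Module.finrank F C = Module.finrank F ({i // i ∉ R} → F) := by
      rw [Module.finrank_fintype_fun_eq_card, Fintype.card_subtype_compl]
      simp [hR]
      omega
    have hsurj : Function.Surjective φ := (LinearMap.injective_iff_surjective_of_finrank_eq_finrank hfr).1 hinj
    let ψ : {c : C // ∀ i, i ∉ S → c.1 i = 0} → ({i // i ∈ S \ R} → F) := fun c i => c.1.1 i.1
    have hψ : Function.Bijective ψ := by
      constructor
      · intro a b hab
        apply Subtype.ext
        apply hinj
        funext i
        by_cases hi : i.1 ∈ S
        · exact congrFun hab ⟨i.1, by simp [hi, i.2]⟩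
        · exact (a.2 _ hi).trans (b.2 _ hi).symm
      · intro g
        obtain ⟨c, hc⟩ := hsurj (fun i => if h : i.1 ∈ S \ R then g ⟨i.1, h⟩ else 0)
        refine ⟨⟨c, ?_⟩, ?_⟩
        · intro i hi
          have := congrFun hc ⟨i, fun h => hi (hRS h)⟩
          simpa [φ, hi] using this
        · funext i
          have h2 := (Finset.mem_sdiff.1 i.2)
          have := congrFun hc ⟨i.1, h2.2⟩
          simpa [φ, ψ, h2.1, h2.2] using this
    rw [Nat.card_eq_of_bijective ψ hψ, Nat.card_fun, Nat.card_eq_fintype_card, Nat.card_eq_fintype_card, Fintype.card_coe,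
      Finset.card_sdiff_of_subset hRS, hR]

/-- closed form for the number of codewords with a given support of size `v` -/
def auxB (q : ℚ) (v : ℕ) : ℚ :=
  (q - 1) ^ v / q ^ 4 + (-1) ^ v * ∑ k ∈ Finset.range 4, (-1) ^ k * (1 - q ^ k / q ^ 4) * (v.choose k : ℚ)

lemma aux_orth (s k : ℕ) :
    ∑ j ∈ Finset.range (s + 1), (s.choose j : ℚ) * ((-1) ^ j * (j.choose k : ℚ)) =
      if s = k then (-1) ^ k else 0 := by
  by_cases hks : k ≤ s
  · obtain ⟨t, rfl⟩ := Nat.exists_eq_add_of_le hks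
    rw [show k + t + 1 = k + (t + 1) by ring, Finset.sum_range_add]
    have h0 : ∑ j ∈ Finset.range k, (((k+t).choose j : ℕ) : ℚ) * ((-1) ^ j * (j.choose k : ℚ)) = 0 := by
      apply Finset.sum_eq_zero
      intro j hj
      rw [Nat.choose_eq_zero_of_lt (Finset.mem_range.1 hj)]; simp
    have h1 : ∀ i ∈ Finset.range (t+1), (((k+t).choose (k+i) : ℕ) : ℚ) * ((-1) ^ (k+i) * ((k+i).choose k : ℚ)) =
        ((k+t).choose k : ℚ) * (-1)^k * ((-1)^i * (t.choose i : ℚ)) := by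
      intro i hi
      have := Nat.choose_mul (n := k+t) (k := k+i) (s := k) (by omega)
      simp only [Nat.add_sub_cancel_left] at this
      have h' : (((k+t).choose (k+i) : ℕ) : ℚ) * ((k+i).choose k : ℚ) = ((k+t).choose k : ℚ) * (t.choose i : ℚ) := by
        exact_mod_cast this
      rw [pow_add]
      linear_combination (-1)^k * (-1)^i * h'
    rw [h0, Finset.sum_congr rfl h1, ← Finset.mul_sum]
    have h2 : ∑ i ∈ Finset.range (t+1), ((-1:ℚ)^i * (t.choose i : ℚ)) = if t = 0 then 1 else 0 := by
      exact_mod_cast Int.alternating_sum_range_choose (n := t)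
    rw [h2]
    by_cases ht : t = 0
    · subst ht; simp
    · simp [ht]
  · rw [if_neg (by omega)]
    apply Finset.sum_eq_zero
    intro j hj
    rw [Nat.choose_eq_zero_of_lt (n := j) (by simp at hj; omega)]; simp

lemma auxB_sum (q : ℕ) (hq : 0 < q) (s : ℕ) :
    ∑ j ∈ Finset.range (s + 1), (s.choose j : ℚ) * auxB q j = (q : ℚ) ^ (s - 4) := by
  have hq' : (q : ℚ) ≠ 0 := by positivity
  have h1 : ∑ j ∈ Finset.range (s + 1), (s.choose j : ℚ) * auxB q j =
      (∑ j ∈ Finset.range (s + 1), ((q:ℚ) - 1) ^ j * 1 ^ (s - j) * (s.choose j : ℚ)) / q ^ 4 +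
      ∑ k ∈ Finset.range 4, (-1) ^ k * (1 - (q:ℚ) ^ k / q ^ 4) *
        ∑ j ∈ Finset.range (s + 1), (s.choose j : ℚ) * ((-1) ^ j * (j.choose k : ℚ)) := by
    rw [Finset.sum_div]
    simp_rw [Finset.mul_sum]
    rw [Finset.sum_comm, ← Finset.sum_add_distrib]
    apply Finset.sum_congr rfl
    intro j _
    unfold auxB
    rw [mul_add, Finset.mul_sum, Finset.mul_sum]
    congr 1
    · simp; ring
    · apply Finset.sum_congr rfl
      intro k _
      ring
  rw [h1, ← add_pow]
  simp_rw [aux_orth]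
  rw [sub_add_cancel]
  by_cases hs : s < 4
  · interval_cases s <;> simp <;> field_simp <;> ring
  · obtain ⟨t, rfl⟩ := Nat.exists_eq_add_of_le (show 4 ≤ s by omega)
    have : ∀ k ∈ Finset.range 4, (-1) ^ k * (1 - (q:ℚ) ^ k / q ^ 4) * (if 4 + t = k then (-1:ℚ)^k else 0) = 0 := by
      intro k hk
      simp at hk
      rw [if_neg (by omega)]; simp
    rw [Finset.sum_eq_zero this, Nat.add_sub_cancel_left, pow_add]
    field_simp
    simp

open Classical in
lemma aux_exact {n : ℕ} (C : Submodule F (Fin n → F))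
    (hmin : ∀ c ∈ C, c ≠ 0 → 5 ≤ hammingNorm c) (hk : Module.finrank F C + 4 = n)
    (S : Finset (Fin n)) :
    (((univ.filter (fun c : Fin n → F => c ∈ C ∧ univ.filter (fun i => c i ≠ 0) = S)).card : ℕ) : ℚ)
      = auxB (Fintype.card F) S.card := by
  induction S using Finset.strongInduction with
  | H S ih =>
    have h1 : ∑ T ∈ S.powerset, (((univ.filter (fun c : Fin n → F => c ∈ C ∧ univ.filter (fun i => c i ≠ 0) = T)).card : ℕ) : ℚ)
        = ((Fintype.card F : ℕ) : ℚ) ^ (S.card - 4) := by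
      rw [← Nat.cast_pow, ← aux_supp_count C hmin hk S]
      norm_cast
      have e : {c : C // ∀ i, i ∉ S → c.1 i = 0} ≃ {c : Fin n → F // c ∈ C ∧ ∀ i, i ∉ S → c i = 0} :=
        Equiv.subtypeSubtypeEquivSubtypeInter (fun c : Fin n → F => c ∈ C) (fun c => ∀ i, i ∉ S → c i = 0)
      rw [Nat.card_congr e, Nat.card_eq_fintype_card, Fintype.card_subtype]
      rw [Finset.card_eq_sum_card_fiberwise (f := fun c => univ.filter (fun i => c i ≠ 0)) (t := S.powerset)]
      · apply Finset.sum_congr rfl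
        intro T hT
        congr 1
        ext c
        simp only [mem_filter, mem_univ, true_and, mem_powerset] at hT ⊢
        constructor
        · rintro ⟨h, rfl⟩
          refine ⟨⟨h, fun i hi => ?_⟩, rfl⟩
          by_contra hne
          exact hi (hT (by simpa using hne))
        · rintro ⟨⟨h, -⟩, h2⟩
          exact ⟨h, h2⟩
      · intro c hc
        simp at hc ⊢
        intro i hi
        by_contra hiS
        simp at hi
        exact hi (hc.2 i hiS)
    have h2 : ∑ T ∈ S.powerset, auxB (Fintype.card F) T.card = ((Fintype.card F : ℕ) : ℚ) ^ (S.card - 4) := by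
      rw [Finset.sum_powerset_apply_card (fun m => auxB (Fintype.card F) m), ← auxB_sum _ Fintype.card_pos]
      simp
    rw [← h2, ← Finset.add_sum_erase _ _ (Finset.mem_powerset_self S), ← Finset.add_sum_erase _ (fun T => auxB (Fintype.card F) T.card) (Finset.mem_powerset_self S)] at h1
    have h3 := Finset.sum_congr (rfl : S.powerset.erase S = _) (fun T hT => ih T (by
      simp only [mem_erase, mem_powerset] at hT
      exact Finset.ssubset_iff_subset_ne.2 ⟨hT.2, hT.1⟩))
    rw [h3] at h1
    exact add_right_cancel h1

open Classical in
lemma aux_A {n : ℕ} (C : Submodule F (Fin n → F))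
    (hmin : ∀ c ∈ C, c ≠ 0 → 5 ≤ hammingNorm c) (hk : Module.finrank F C + 4 = n) (v : ℕ) :
    (numCodewordsOfWeight C v : ℚ) = (n.choose v : ℚ) * auxB (Fintype.card F) v := by
  have : numCodewordsOfWeight C v = ∑ S ∈ (univ : Finset (Fin n)).powersetCard v,
      (univ.filter (fun c : Fin n → F => c ∈ C ∧ univ.filter (fun i => c i ≠ 0) = S)).card := by
    unfold numCodewordsOfWeight
    rw [show {x : Fin n → F | x ∈ C ∧ hammingNorm x = v} = ((univ.filter (fun c : Fin n → F => c ∈ C ∧ hammingNorm c = v) : Finset _) : Set (Fin n → F)) by ext; simp,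
      Set.ncard_coe_finset]
    rw [Finset.card_eq_sum_card_fiberwise (f := fun c => univ.filter (fun i => c i ≠ 0)) (t := (univ : Finset (Fin n)).powersetCard v)]
    · apply Finset.sum_congr rfl
      intro T hT
      congr 1
      ext c
      simp only [mem_filter, mem_univ, true_and, mem_powersetCard] at hT ⊢
      constructor
      · tauto
      · rintro ⟨h, rfl⟩
        exact ⟨⟨h, hT.2⟩, rfl⟩
    · intro c hc
      simp [hammingNorm] at hc ⊢
      exact hc.2
  rw [this]
  push_cast
  rw [Finset.sum_congr rfl (fun S hS => by rw [aux_exact C hmin hk S, (Finset.mem_powersetCard.1 hS).2])]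
  simp
end MDSAux

section StepAux
variable {F : Type*} [Field F] [Fintype F] [DecidableEq F]

lemma aux_pairs {n : ℕ} (h : (Fin n → F) → ℚ) :
    2 * ∑ e ∈ univ.filter (fun e : Fin n → F => hammingNorm e = 2), h e =
    ∑ i, ∑ j ∈ univ.erase i, ∑ a ∈ univ.erase (0 : F), ∑ b ∈ univ.erase (0:F),
      h (Pi.single i a + Pi.single j b) := by
  have h1 : 2 * ∑ e ∈ univ.filter (fun e : Fin n → F => hammingNorm e = 2), h e =
      ∑ e ∈ univ.filter (fun e : Fin n → F => hammingNorm e = 2),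
        ∑ p ∈ (univ.filter (fun i => e i ≠ 0)).offDiag, h e := by
    rw [Finset.mul_sum]
    apply Finset.sum_congr rfl
    intro e he
    have he2 : (univ.filter (fun i => e i ≠ 0)).card = 2 := by
      simpa [hammingNorm] using he
    rw [Finset.sum_const, Finset.offDiag_card, he2]
    simp
  have h2 : ∑ i, ∑ j ∈ univ.erase i, ∑ a ∈ univ.erase (0 : F), ∑ b ∈ univ.erase (0:F),
      h (Pi.single i a + Pi.single j b) =
      ∑ p ∈ (univ : Finset (Fin n)).offDiag, ∑ r ∈ (univ.erase (0:F)) ×ˢ (univ.erase (0:F)),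
        h (Pi.single p.1 r.1 + Pi.single p.2 r.2) := by
    simp_rw [Finset.sum_product]
    rw [Finset.sum_sigma']
    apply Finset.sum_bij' (fun x _ => (x.1, x.2)) (fun x _ => ⟨x.1, x.2⟩)
    all_goals simp [eq_comm]
  rw [h1, h2, Finset.sum_sigma', Finset.sum_sigma']
  refine Finset.sum_bij' (fun x _ => ⟨x.2, (x.1 x.2.1, x.1 x.2.2)⟩)
    (fun x _ => ⟨Pi.single x.1.1 x.2.1 + Pi.single x.1.2 x.2.2, x.1⟩) ?_ ?_ ?_ ?_ ?_
  · rintro ⟨e, i, j⟩ hx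
    simp only [mem_sigma, mem_filter, mem_univ, true_and, mem_offDiag, mem_product, mem_erase, ne_eq, and_true] at hx ⊢
    tauto
  · rintro ⟨⟨i, j⟩, a, b⟩ hx
    simp only [mem_sigma, mem_filter, mem_univ, true_and, mem_offDiag, mem_product, mem_erase, ne_eq, and_true] at hx ⊢
    obtain ⟨hij, ha, hb⟩ := hx
    have hs : (univ.filter (fun k => (Pi.single i a + Pi.single j b : Fin n → F) k ≠ 0)) = {i, j} := by
      ext k
      simp only [mem_filter, mem_univ, true_and, Pi.add_apply, mem_insert, mem_singleton]
      by_cases hki : k = i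
      · subst hki; simp [hij, ha]
      · by_cases hkj : k = j
        · subst hkj; simp [hki, hb]
        · simp [hki, hkj]
    refine ⟨?_, ?_, ?_, hij⟩
    · unfold hammingNorm
      rw [hs, Finset.card_pair hij]
    · simp [hij, ha]
    · simp [Ne.symm hij, hb]
  · rintro ⟨e, i, j⟩ hx
    simp only [mem_sigma, mem_filter, mem_univ, true_and, mem_offDiag] at hx
    obtain ⟨he, hi, hj, hij⟩ := hx
    have hs : ({i, j} : Finset (Fin n)) = univ.filter (fun k => e k ≠ 0) := by
      apply Finset.eq_of_subset_of_card_le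
      · intro k hk
        simp at hk
        rcases hk with rfl | rfl <;> simpa
      · rw [Finset.card_pair hij]
        unfold hammingNorm at he
        exact he.le
    have : (Pi.single i (e i) + Pi.single j (e j) : Fin n → F) = e := by
      funext k
      by_cases hki : k = i
      · subst hki; simp [hij]
      · by_cases hkj : k = j
        · subst hkj; simp [hki]
        · have : k ∉ ({i, j} : Finset (Fin n)) := by simp [hki, hkj]
          rw [hs] at this
          simp at this
          simp [hki, hkj, this]
    simp [this]
  · rintro ⟨⟨i, j⟩, a, b⟩ hx
    simp only [mem_sigma, mem_filter, mem_univ, true_and, mem_offDiag, mem_product, mem_erase, ne_eq, and_true] at hx ⊢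
    obtain ⟨hij, ha, hb⟩ := hx
    simp [hij, Ne.symm hij]
  · rintro ⟨e, i, j⟩ hx
    simp only [mem_sigma, mem_filter, mem_univ, true_and, mem_offDiag] at hx
    obtain ⟨he, hi, hj, hij⟩ := hx
    have hs : ({i, j} : Finset (Fin n)) = univ.filter (fun k => e k ≠ 0) := by
      apply Finset.eq_of_subset_of_card_le
      · intro k hk
        simp at hk
        rcases hk with rfl | rfl <;> simpa
      · rw [Finset.card_pair hij]
        unfold hammingNorm at he
        exact he.le
    have : (Pi.single i (e i) + Pi.single j (e j) : Fin n → F) = e := by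
      funext k
      by_cases hki : k = i
      · subst hki; simp [hij]
      · by_cases hkj : k = j
        · subst hkj; simp [hki]
        · have : k ∉ ({i, j} : Finset (Fin n)) := by simp [hki, hkj]
          rw [hs] at this
          simp at this
          simp [hki, hkj, this]
    simp [this]

lemma aux_wt {n : ℕ} (c : Fin n → F) (i : Fin n) (a : F) :
    hammingNorm (c + Pi.single i a) + (if c i ≠ 0 then 1 else 0) =
      hammingNorm c + (if c i + a ≠ 0 then 1 else 0) := by
  unfold hammingNorm
  rw [Finset.card_filter, Finset.card_filter, ← Finset.add_sum_erase _ _ (mem_univ i),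
    ← Finset.add_sum_erase univ (fun j => if c j ≠ 0 then 1 else 0) (mem_univ i)]
  have : ∑ x ∈ univ.erase i, (if (c + Pi.single i a : Fin n → F) x ≠ 0 then 1 else 0) =
      ∑ x ∈ univ.erase i, (if c x ≠ 0 then 1 else 0) := by
    apply Finset.sum_congr rfl
    intro x hx
    simp at hx
    simp [hx]
  rw [this]
  simp only [Pi.add_apply, Pi.single_eq_same]
  omega

/-- one-step operator -/
def auxT (n : ℕ) (q : ℚ) (f : ℕ → ℚ) (v : ℕ) : ℚ :=
  v * f (v - 1) + v * (q - 2) * f v + (n - v) * (q - 1) * f (v + 1)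

lemma aux_step {n : ℕ} (f : ℕ → ℚ) (c : Fin n → F) :
    ∑ i, ∑ a ∈ univ.erase (0 : F), f (hammingNorm (c + Pi.single i a)) =
      auxT n (Fintype.card F) f (hammingNorm c) := by
  have hcard : 2 ≤ Fintype.card F := Fintype.one_lt_card
  have h1 : ∀ i, ∑ a ∈ univ.erase (0 : F), f (hammingNorm (c + Pi.single i a)) =
      if c i ≠ 0 then f (hammingNorm c - 1) + (Fintype.card F - 2) * f (hammingNorm c)
      else (Fintype.card F - 1) * f (hammingNorm c + 1) := by
    intro i
    split_ifs with hi
    · have hm : -c i ∈ univ.erase (0:F) := by simpa using hi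
      rw [← Finset.add_sum_erase _ _ hm]
      congr 1
      · have := aux_wt c i (-c i)
        simp [hi] at this
        congr 1
        omega
      · rw [Finset.sum_congr rfl (g := fun _ => f (hammingNorm c))]
        · rw [Finset.sum_const, Finset.card_erase_of_mem hm, Finset.card_erase_of_mem (mem_univ _), Finset.card_univ, nsmul_eq_mul,
            Nat.sub_sub, Nat.cast_sub hcard]
          simp
        · intro a ha
          simp at ha
          have h' : c i + a ≠ 0 := fun h => ha.1 (by linear_combination h)
          have := aux_wt c i a
          rw [if_pos hi, if_pos h'] at this
          congr 1
          omega
    · rw [Finset.sum_congr rfl (g := fun _ => f (hammingNorm c + 1))]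
      · rw [Finset.sum_const, Finset.card_erase_of_mem (mem_univ _), Finset.card_univ, nsmul_eq_mul,
            Nat.cast_sub (by omega)]
        simp
      · intro a ha
        simp at ha hi
        have := aux_wt c i a
        simp [hi, ha] at this
        congr 1
  rw [Finset.sum_congr rfl (fun i _ => h1 i), Finset.sum_ite, Finset.sum_const, Finset.sum_const]
  have hA : (univ.filter (fun i => c i ≠ 0)).card = hammingNorm c := rfl
  have hB : ((univ.filter (fun i => ¬ (c i ≠ 0))).card : ℚ) = n - hammingNorm c := by
    have := Finset.card_filter_add_card_filter_not (s := (univ : Finset (Fin n))) (fun i => c i ≠ 0)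
    rw [hA, Finset.card_univ, Fintype.card_fin] at this
    have h' : (hammingNorm c : ℚ) + ((univ.filter (fun i => ¬ (c i ≠ 0))).card : ℚ) = n := by exact_mod_cast this
    linarith
  rw [hA, nsmul_eq_mul, nsmul_eq_mul, hB]
  unfold auxT
  ring

lemma aux_double (g : F → ℚ) :
    ∑ a ∈ univ.erase (0 : F), ∑ b ∈ univ.erase (0 : F), g (a + b) =
      (Fintype.card F - 1) * g 0 + (Fintype.card F - 2) * ∑ a ∈ univ.erase (0 : F), g a := by
  have hs : ∀ h : F → ℚ, ∑ a ∈ univ.erase (0 : F), h a = ∑ a, h a - h 0 := by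
    intro h
    rw [← Finset.add_sum_erase univ h (mem_univ 0)]; ring
  simp_rw [hs]
  have h2 : ∀ a, ∑ b, g (a + b) = ∑ b, g b := fun a => Fintype.sum_equiv (Equiv.addLeft a) _ _ (fun _ => rfl)
  simp_rw [h2]
  simp
  ring

lemma aux_two {n : ℕ} (f : ℕ → ℚ) (c : Fin n → F) :
    2 * ∑ e ∈ univ.filter (fun e : Fin n → F => hammingNorm e = 2), f (hammingNorm (c + e)) =
      auxT n (Fintype.card F) (auxT n (Fintype.card F) f) (hammingNorm c)
      - (Fintype.card F - 2) * auxT n (Fintype.card F) f (hammingNorm c)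
      - n * (Fintype.card F - 1) * f (hammingNorm c) := by
  rw [aux_pairs]
  have h1 : ∀ i : Fin n, ∑ j ∈ univ.erase i, ∑ a ∈ univ.erase (0 : F), ∑ b ∈ univ.erase (0:F),
      f (hammingNorm (c + (Pi.single i a + Pi.single j b))) =
      (∑ a ∈ univ.erase (0 : F), auxT n (Fintype.card F) f (hammingNorm (c + Pi.single i a))) -
      ((Fintype.card F - 1) * f (hammingNorm c) + (Fintype.card F - 2) *
        ∑ a ∈ univ.erase (0 : F), f (hammingNorm (c + Pi.single i a))) := by
    intro i
    have h2 := aux_double (fun a : F => f (hammingNorm (c + Pi.single i a)))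
    simp only [Pi.single_zero, add_zero] at h2
    rw [← h2, ← Finset.sum_sub_distrib, Finset.sum_comm]
    apply Finset.sum_congr rfl
    intro a _
    rw [← aux_step, ← Finset.add_sum_erase _ _ (mem_univ i)]
    simp only [Pi.single_add, add_assoc]
    ring
  rw [Finset.sum_congr rfl (fun i _ => h1 i), Finset.sum_sub_distrib, Finset.sum_add_distrib, ← Finset.mul_sum,
    ← Finset.mul_sum, aux_step, aux_step]
  simp
  ring

end StepAux

section MainAux
variable {F : Type*} [Field F] [Fintype F] [DecidableEq F]

lemma aux_unique {n : ℕ} (C : Submodule F (Fin n → F))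
    (hmin : ∀ c ∈ C, c ≠ 0 → 5 ≤ hammingNorm c) (e e' : Fin n → F)
    (h : hammingNorm e ≤ 2) (h' : hammingNorm e' ≤ 2) (hC : e - e' ∈ C) : e = e' := by
  by_contra hne
  have h5 := hmin _ hC (sub_ne_zero.2 hne)
  have h1 : hammingNorm (e - e') ≤ hammingNorm e + hammingNorm e' := by
    have := hammingDist_triangle e 0 e'
    rw [hammingDist_zero_right, hammingDist_zero_left, hammingDist_eq_hammingNorm] at this
    have h3 : hammingNorm (e - e') = hammingNorm (-e + e') := by
      unfold hammingNorm
      congr 1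
      ext i
      simp [neg_add_eq_sub, sub_eq_zero, eq_comm]
    omega
  omega

lemma aux_coset {n : ℕ} (C : Submodule F (Fin n → F))
    (hmin : ∀ c ∈ C, c ≠ 0 → 5 ≤ hammingNorm c) (x : Fin n → F) :
    cosetWeight C x = 2 ↔ ∃ e, hammingNorm e = 2 ∧ x - e ∈ C := by
  unfold cosetWeight
  constructor
  · intro h
    have hne : {m : ℕ | ∃ c ∈ C, hammingNorm (x - c) = m}.Nonempty := ⟨_, 0, C.zero_mem, rfl⟩
    have := Nat.sInf_mem hne
    rw [h] at this
    obtain ⟨c, hc, h2⟩ := this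
    exact ⟨x - c, h2, by simpa using hc⟩
  · rintro ⟨e, he, hx⟩
    apply le_antisymm
    · apply Nat.sInf_le
      exact ⟨x - e, hx, by simpa using he⟩
    · have hne : {m : ℕ | ∃ c ∈ C, hammingNorm (x - c) = m}.Nonempty := ⟨_, 0, C.zero_mem, rfl⟩
      apply le_csInf hne
      rintro m ⟨c, hc, rfl⟩
      by_contra hlt
      have := aux_unique C hmin (x - c) e (by omega) he.le (by
        have := C.sub_mem hx hc
        rwa [show x - e - c = x - c - e by abel] at this)
      rw [this] at hlt
      omega

open Classical in
lemma aux_count {n : ℕ} (C : Submodule F (Fin n → F))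
    (hmin : ∀ c ∈ C, c ≠ 0 → 5 ≤ hammingNorm c) (w : ℕ) :
    (numVectorsCosetExact C w 2 : ℚ) =
      ∑ c ∈ univ.filter (fun c : Fin n → F => c ∈ C),
        ∑ e ∈ univ.filter (fun e : Fin n → F => hammingNorm e = 2),
          (if hammingNorm (c + e) = w then (1 : ℚ) else 0) := by
  rw [← Finset.sum_product', Finset.sum_boole]
  congr 1
  unfold numVectorsCosetExact
  rw [show {x : Fin n → F | hammingNorm x = w ∧ cosetWeight C x = 2} =
    ((univ.filter (fun x : Fin n → F => hammingNorm x = w ∧ cosetWeight C x = 2) : Finset _) : Set (Fin n → F)) by ext; simp,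
    Set.ncard_coe_finset]
  symm
  apply Finset.card_bij (fun p _ => p.1 + p.2)
  · rintro ⟨c, e⟩ h
    simp only [mem_filter, mem_univ, true_and, mem_product] at h ⊢
    refine ⟨h.2, (aux_coset C hmin _).2 ⟨e, h.1.2, by simpa using h.1.1⟩⟩
  · rintro ⟨c, e⟩ h ⟨c', e'⟩ h' heq
    simp only [mem_filter, mem_univ, true_and, mem_product] at h h' heq
    have h1 : e = e' := aux_unique C hmin e e' h.1.2.le h'.1.2.le (by
      have := C.sub_mem h'.1.1 h.1.1
      rwa [show c' - c = e - e' by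
        rw [sub_eq_sub_iff_add_eq_add, add_comm e c, heq]] at this)
    subst h1
    rw [add_right_cancel heq]
  · intro x hx
    simp only [mem_filter, mem_univ, true_and] at hx
    obtain ⟨e, he, hxe⟩ := (aux_coset C hmin _).1 hx.2
    exact ⟨(x - e, e), by simp [he, hxe, hx.1], by simp⟩

lemma aux_G (n u : ℕ) (q : ℚ) (v : ℕ) (f : ℕ → ℚ) (hf : ∀ x, f x = if x = u + 3 then 1 else 0) :
    auxT n q (auxT n q f) v - (q - 2) * auxT n q f v - n * (q - 1) * f v =
      ((u:ℚ) + 5) * (u + 4) * (if v = u + 5 then 1 else 0)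
      + 2 * (u + 4) * (u + 3) * (q - 2) * (if v = u + 4 then 1 else 0)
      + ((u + 3) * (u + 2) * (q - 2) ^ 2 + 2 * (u + 3) * (n - (u + 3)) * (q - 1)) * (if v = u + 3 then 1 else 0)
      + 2 * (n - (u + 2)) * (q - 1) * (u + 2) * (q - 2) * (if v = u + 2 then 1 else 0)
      + (n - (u + 1)) * (n - (u + 2)) * (q - 1) ^ 2 * (if v = u + 1 then 1 else 0) := by
  unfold auxT
  simp only [hf]
  by_cases h1 : v = u + 1
  · subst h1; simp [show u ≠ u + 4 by omega]; ring
  by_cases h2 : v = u + 2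
  · subst h2; simp; ring
  by_cases h3 : v = u + 3
  · subst h3; simp; ring
  by_cases h4 : v = u + 4
  · subst h4; simp; ring
  by_cases h5 : v = u + 5
  · subst h5; simp
  have e1 : v - 1 - 1 ≠ u + 3 := by omega
  have e2 : v - 1 ≠ u + 3 := by omega
  have e3 : v - 1 + 1 ≠ u + 3 := by omega
  have e4 : v + 1 - 1 ≠ u + 3 := by omega
  have e5 : v + 1 ≠ u + 3 := by omega
  have e6 : v + 1 + 1 ≠ u + 3 := by omega
  simp only [h1, h2, h3, h4, h5, e1, e2, e3, e4, e5, e6, if_false]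
  ring

open Classical in
lemma aux_two_count {n : ℕ} (C : Submodule F (Fin n → F))
    (hmin : ∀ c ∈ C, c ≠ 0 → 5 ≤ hammingNorm c) (u : ℕ) (q : ℕ) (hq : Fintype.card F = q) :
    2 * (numVectorsCosetExact C (u + 3) 2 : ℚ) =
      ((u:ℚ) + 5) * (u + 4) * numCodewordsOfWeight C (u + 5)
      + 2 * (u + 4) * (u + 3) * (q - 2) * numCodewordsOfWeight C (u + 4)
      + ((u + 3) * (u + 2) * (q - 2) ^ 2 + 2 * (u + 3) * (n - (u + 3)) * (q - 1)) * numCodewordsOfWeight C (u + 3)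
      + 2 * (n - (u + 2)) * (q - 1) * (u + 2) * (q - 2) * numCodewordsOfWeight C (u + 2)
      + (n - (u + 1)) * (n - (u + 2)) * (q - 1) ^ 2 * numCodewordsOfWeight C (u + 1) := by
  have hA : ∀ v, (numCodewordsOfWeight C v : ℚ) = ∑ c ∈ univ.filter (fun c : Fin n → F => c ∈ C),
      (if hammingNorm c = v then (1:ℚ) else 0) := by
    intro v
    rw [Finset.sum_boole]
    congr 1
    unfold numCodewordsOfWeight
    rw [← Set.ncard_coe_finset]
    congr 1
    ext; simp
  rw [aux_count C hmin, Finset.mul_sum]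
  simp only [hA, Finset.mul_sum, ← Finset.sum_add_distrib]
  apply Finset.sum_congr rfl
  intro c _
  rw [← aux_G n u q (hammingNorm c) (fun x => if x = u + 3 then 1 else 0) (fun _ => rfl), ← hq,
    ← aux_two, Finset.mul_sum]

lemma aux_choose_step (n v : ℕ) : ((v:ℚ) + 1) * (n.choose (v + 1) : ℚ) = (n - v) * (n.choose v : ℚ) := by
  by_cases h : v ≤ n
  · have := Nat.choose_succ_right_eq n v
    have h2 : (n.choose (v+1) : ℚ) * ((v:ℚ) + 1) = (n.choose v : ℚ) * ((n - v : ℕ) : ℚ) := by exact_mod_cast this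
    rw [Nat.cast_sub h] at h2
    linarith
  · rw [Nat.choose_eq_zero_of_lt (by omega), Nat.choose_eq_zero_of_lt (by omega)]; simp

lemma aux_choose_two (v : ℕ) : (v.choose 2 : ℚ) = v * (v - 1) / 2 := by
  have h1 := aux_choose_step v 1
  simp at h1
  linarith

lemma aux_choose_three (v : ℕ) : (v.choose 3 : ℚ) = v * (v - 1) * (v - 2) / 6 := by
  have h1 := aux_choose_step v 2
  rw [aux_choose_two] at h1
  push_cast at h1
  linarith

lemma auxB_eq (q : ℚ) (v : ℕ) : auxB q v = (q - 1) ^ v / q ^ 4 + (-1) ^ v *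
    ((1 - 1 / q ^ 4) - (1 - q / q ^ 4) * v + (1 - q ^ 2 / q ^ 4) * (v * (v - 1) / 2)
      - (1 - q ^ 3 / q ^ 4) * (v * (v - 1) * (v - 2) / 6)) := by
  unfold auxB
  simp only [Finset.sum_range_succ, Finset.sum_range_zero, aux_choose_two, aux_choose_three,
    Nat.choose_zero_right, Nat.choose_one_right]
  push_cast
  ring

end MainAux


/-- **Integral weight spectrum of the weight-2 cosets of a `[q+1, q-3, 5]_q` MDS code**
(Theorem 5.3(ii), eq. (5.10)).  For a `[q+1,q-3,5]_q` MDS code and `3 ≤ w ≤ q+1`, as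
rationals,
`A_w^Σ(V^{(2)}) = C(q+1,2)(q-1)²[ A_w(C)
  - (-1)^{w-5}( C(q+1,w)C(w-1,3) - C(q-1,w-2)C(w-3,1) )
  + (-1)^{w-5} (1/3) C(q-2,w-3) C(q-2,2) ]`. -/
theorem numVectorsCosetExact_two_dist_five {F : Type*} [Field F] [Fintype F] [DecidableEq F]
    (q w : ℕ) (hq : Fintype.card F = q)
    (C : Submodule F (Fin (q + 1) → F))
    (hk : Module.finrank F C + 3 = q) (hmin : HasMinDist C 5)
    (hw1 : 3 ≤ w) (hwn : w ≤ q + 1) :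
    (numVectorsCosetExact C w 2 : ℚ) =
      ((q + 1).choose 2 : ℚ) * ((q : ℚ) - 1) ^ 2 *
        ((numCodewordsOfWeight C w : ℚ)
          - (-1 : ℚ) ^ (w + 5) *
            (((q + 1).choose w : ℚ) * ((w - 1).choose 3 : ℚ)
              - ((q - 1).choose (w - 2) : ℚ) * ((w - 3).choose 1 : ℚ))
          + (-1 : ℚ) ^ (w + 5) * (1 / 3) *
              ((q - 2).choose (w - 3) : ℚ) * ((q - 2).choose 2 : ℚ)) := by
  obtain ⟨u, rfl⟩ := Nat.exists_eq_add_of_le' hw1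
  obtain ⟨hmin, c0, hc0, hc0', -⟩ := hmin
  have hpos : 0 < Module.finrank F C := by
    rw [Module.finrank_pos_iff]
    exact ⟨⟨⟨c0, hc0⟩, 0, fun h => hc0' (congrArg Subtype.val h)⟩⟩
  obtain ⟨p, rfl⟩ := Nat.exists_eq_add_of_le' (show 4 ≤ q by omega)
  have h2 := aux_two_count C hmin u (p + 4) hq
  simp only [aux_A C hmin (show Module.finrank F C + 4 = p + 4 + 1 by omega), hq] at h2 ⊢
  have r1 := aux_choose_step (p + 4 + 1) (u + 1)
  have r2 := aux_choose_step (p + 4 + 1) (u + 2)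
  have r3 := aux_choose_step (p + 4 + 1) (u + 3)
  have r4 := aux_choose_step (p + 4 + 1) (u + 4)
  have s1 : ((p:ℚ) + 5) * ((p + 4).choose (u + 2) : ℚ) = ((p + 4 + 1).choose (u + 3) : ℚ) * (u + 3) := by
    exact_mod_cast Nat.add_one_mul_choose_eq (p + 4) (u + 2)
  have s2 : ((p:ℚ) + 4) * ((p + 3).choose (u + 1) : ℚ) = ((p + 4).choose (u + 2) : ℚ) * (u + 2) := by
    exact_mod_cast Nat.add_one_mul_choose_eq (p + 3) (u + 1)
  have s3 : ((p:ℚ) + 3) * ((p + 2).choose u : ℚ) = ((p + 3).choose (u + 1) : ℚ) * (u + 1) := by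
    exact_mod_cast Nat.add_one_mul_choose_eq (p + 2) u
  rw [show p + 4 - 1 = p + 3 by omega, show p + 4 - 2 = p + 2 by omega, show u + 3 - 1 = u + 2 by omega,
    show u + 3 - 2 = u + 1 by omega, show u + 3 - 3 = u by omega, Nat.choose_one_right,
    aux_choose_two, aux_choose_two, aux_choose_three]
  have hp5 : ((p:ℚ) + 5) ≠ 0 := by positivity
  have hp4 : ((p:ℚ) + 4) ≠ 0 := by positivity
  have hp3 : ((p:ℚ) + 3) ≠ 0 := by positivity
  push_cast at *
  rw [mul_comm, ← eq_div_iff hp5] at s1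
  rw [mul_comm, ← eq_div_iff hp4, s1] at s2
  rw [mul_comm, ← eq_div_iff hp3, s2] at s3
  rw [s2, s3]
  generalize ((p + 4 + 1).choose (u + 1) : ℚ) = a1 at *
  generalize ((p + 4 + 1).choose (u + 2) : ℚ) = a2 at *
  generalize ((p + 4 + 1).choose (u + 3) : ℚ) = a3 at *
  generalize ((p + 4 + 1).choose (u + 4) : ℚ) = a4 at *
  generalize ((p + 4 + 1).choose (u + 5) : ℚ) = a5 at *
  have h3 : 2 * (numVectorsCosetExact C (u + 3) 2 : ℚ) = a3 * (
      ((p:ℚ) + 5 - (u + 3)) * (p + 5 - (u + 4)) * auxB (p + 4) (u + 5)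
      + 2 * (p + 5 - (u + 3)) * (u + 3) * (p + 2) * auxB (p + 4) (u + 4)
      + ((u + 3) * (u + 2) * (p + 2) ^ 2 + 2 * (u + 3) * (p + 5 - (u + 3)) * (p + 3)) * auxB (p + 4) (u + 3)
      + 2 * (u + 3) * (p + 3) * (u + 2) * (p + 2) * auxB (p + 4) (u + 2)
      + (u + 3) * (u + 2) * (p + 3) ^ 2 * auxB (p + 4) (u + 1)) := by
    rw [h2]
    linear_combination (u + 4) * auxB (p + 4) (u + 5) * r4
      + (p + 5 - (u + 4)) * auxB (p + 4) (u + 5) * r3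
      + 2 * (u + 3) * (p + 2) * auxB (p + 4) (u + 4) * r3
      - 2 * (p + 3) * (u + 2) * (p + 2) * auxB (p + 4) (u + 2) * r2
      - (p + 5 - (u + 2)) * (p + 3) ^ 2 * auxB (p + 4) (u + 1) * r1
      - (u + 2) * (p + 3) ^ 2 * auxB (p + 4) (u + 1) * r2
  have h4 : (numVectorsCosetExact C (u + 3) 2 : ℚ) = 2 * (numVectorsCosetExact C (u + 3) 2 : ℚ) / 2 := by ring
  rw [h4, h3]
  simp only [auxB_eq]
  push_cast
  have e1 : ((p:ℚ) + 4 - 1) = p + 3 := by ring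
  rw [e1]
  simp only [pow_add]
  generalize ((p:ℚ) + 3) ^ u = X
  generalize (-1:ℚ) ^ u = Z
  field_simp
  ring
end
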